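/- In dimension 21, every finite set S of points on the unit sphere of EuclideanSpace ℝ (Fin 21) (i.e., ‖x‖ = 1 for all x ∈ S) such that any two distinct points of S are at Euclidean distance at least 1 has cardinality at most 54584; that is, the kissing number in dimension 21 is at most 54584. -/

import Mathlib

/-!
The proof is the three-point semidefinite bound of Bachoc and Vallentin. For a point `z` of the
code `S`, the Gegenbauer kernels of the hyperplane orthogonal to `z` are positive definite, so that
every choice of polynomials gives a function `T` with
`0 ≤ A + 2 ∑ x, L ⟪x, z⟫ + ∑ x, ∑ y, T ⟪x, z⟫ ⟪y, z⟫ ⟪x, y⟫`, where `x` and `y` run over `S \ {z}`.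
After summation over `z` the triples of distinct points contribute at most zero, provided that
`T u v t + T u t v + T v t u ≤ 0` whenever `u, v, t ∈ [-1, 1 / 2]` are the inner products of three
unit vectors; the pairs contribute at most `-m` each, provided that `2 L u + T u u 1 ≤ -m`. This
gives `(|S| - 1) m ≤ A`.

The certificate consists of integer polynomials in `1 + u`. The inequality in three variables is
symmetric, so it is checked for `u ≤ v ≤ t`: this region is covered by boxes, and on each of them
the Bernstein coefficients of the polynomial, corrected by a nonnegative multiple of the Gram
determinant, are nonnegative. All Bernstein coefficients with respect to two of the variables are
packed into a single integer, and their signs are tested by one bitwise operation.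
-/

namespace KissingNumber

section ZonalHarmonics

open MvPolynomial

/-- The homogenised Gegenbauer polynomials `k! r^(k/2) C_k^(c/2)(w / √r)`, through their three-term
recurrence. For `c = d - 2`, `w = ⟪x, y⟫` and `r = ‖x‖² ‖y‖²` they are multiples of the zonal
harmonics of `ℝᵈ`; the factor `k!` keeps all coefficients integral for integral `c`. -/
def zonal {R : Type*} [CommRing R] (c w r : R) : ℕ → R
  | 0 => 1
  | 1 => c * w
  | k + 2 => (2 * (k + 1) + c) * w * zonal c w r (k + 1) - (k + 1) * (k + c) * r * zonal c w r k

variable {σ : Type*}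

/-- The derivative of polynomials in the direction `x`. -/
noncomputable def directionalDeriv (x : σ → ℝ) :
    Derivation ℝ (MvPolynomial σ ℝ) (MvPolynomial σ ℝ) :=
  mkDerivation ℝ fun i => C (x i)

theorem pderiv_pderiv_comm (i j : σ) (p : MvPolynomial σ ℝ) :
    pderiv i (pderiv j p) = pderiv j (pderiv i p) := by
  ext m
  by_cases h : i = j
  · rw [h]
  · simp only [coeff_pderiv, add_right_comm m (Finsupp.single j 1), Finsupp.add_apply,
      Finsupp.single_eq_of_ne h, Finsupp.single_eq_of_ne (Ne.symm h), add_zero]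
    ring

variable [Fintype σ]

/-- The linear form `y ↦ x ⬝ᵥ y` as a polynomial. -/
noncomputable def linearForm (x : σ → ℝ) : MvPolynomial σ ℝ := ∑ i, C (x i) * X i

variable (σ) in
/-- The quadratic form `y ↦ y ⬝ᵥ y` as a polynomial. -/
noncomputable def normSqForm : MvPolynomial σ ℝ := ∑ i, X i * X i

/-- The Laplace operator on polynomials. -/
noncomputable def laplacian : MvPolynomial σ ℝ →ₗ[ℝ] MvPolynomial σ ℝ :=
  ∑ i, (pderiv i).toLinearMap ∘ₗ (pderiv i).toLinearMap

/-- The homogenised Gegenbauer polynomial `zonal c` as a polynomial in `y`, for a fixed pole `x`. -/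
noncomputable def zonalPoly (c : ℝ) (x : σ → ℝ) (k : ℕ) : MvPolynomial σ ℝ :=
  zonal (C c) (linearForm x) (C (x ⬝ᵥ x) * normSqForm σ) k

theorem directionalDeriv_apply (x : σ → ℝ) (p : MvPolynomial σ ℝ) :
    directionalDeriv x p = ∑ i, C (x i) * pderiv i p := by
  classical
  induction p using MvPolynomial.induction_on with
  | C a => simp [directionalDeriv]
  | add p q hp hq => simp only [map_add, hp, hq, mul_add, Finset.sum_add_distrib]
  | mul_X p i hp =>
    simp only [Derivation.leibniz, hp, smul_eq_mul, mul_add, Finset.sum_add_distrib, pderiv_X,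
      Pi.single_apply, Finset.mul_sum]
    simp [directionalDeriv, mul_comm, mul_left_comm]

omit [Fintype σ] in
theorem isHomogeneous_directionalDeriv [Finite σ] (x : σ → ℝ) {p : MvPolynomial σ ℝ} {n : ℕ}
    (hp : p.IsHomogeneous n) : (directionalDeriv x p).IsHomogeneous (n - 1) := by
  cases nonempty_fintype σ
  rw [directionalDeriv_apply]
  exact .sum _ _ _ fun i _ => hp.pderiv.C_mul (x i)

omit [Fintype σ] in
theorem eval_directionalDeriv_self [Finite σ] (x : σ → ℝ) {p : MvPolynomial σ ℝ} {n : ℕ}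
    (hp : p.IsHomogeneous n) : eval x (directionalDeriv x p) = n * eval x p := by
  cases nonempty_fintype σ
  simpa [directionalDeriv_apply] using congrArg (eval x) hp.sum_X_mul_pderiv

theorem laplacian_apply (p : MvPolynomial σ ℝ) : laplacian p = ∑ i, pderiv i (pderiv i p) := by
  simp [laplacian]

theorem directionalDeriv_linearForm (x y : σ → ℝ) :
    directionalDeriv x (linearForm y) = C (x ⬝ᵥ y) := by
  simp [linearForm, directionalDeriv, dotProduct, mul_comm]

theorem directionalDeriv_normSqForm (x : σ → ℝ) :
    directionalDeriv x (normSqForm σ) = 2 * linearForm x := by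
  simp [linearForm, normSqForm, directionalDeriv, Finset.mul_sum, mul_comm, two_mul]

theorem pderiv_linearForm (i : σ) (x : σ → ℝ) : pderiv i (linearForm x) = C (x i) := by
  classical
  simp [linearForm, pderiv_X, Pi.single_apply]

theorem pderiv_normSqForm (i : σ) : pderiv i (normSqForm σ) = 2 * X i := by
  classical
  simp [normSqForm, pderiv_X, Pi.single_apply, two_mul, Finset.sum_add_distrib]

theorem laplacian_directionalDeriv (x : σ → ℝ) (p : MvPolynomial σ ℝ) :
    laplacian (directionalDeriv x p) = directionalDeriv x (laplacian p) := by
  simp only [laplacian_apply, directionalDeriv_apply, map_sum, pderiv_C_mul]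
  rw [Finset.sum_comm]
  refine Finset.sum_congr rfl fun j _ => Finset.sum_congr rfl fun i _ => ?_
  rw [pderiv_pderiv_comm i j, pderiv_pderiv_comm i j]

theorem laplacian_mul (p q : MvPolynomial σ ℝ) :
    laplacian (p * q) =
      p * laplacian q + q * laplacian p + 2 * ∑ i, pderiv i p * pderiv i q := by
  simp only [laplacian_apply, Finset.mul_sum, ← Finset.sum_add_distrib]
  refine Finset.sum_congr rfl fun i _ => ?_
  simp only [Derivation.leibniz, map_add, smul_eq_mul]
  ring

theorem laplacian_C_mul (a : ℝ) (p : MvPolynomial σ ℝ) :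
    laplacian (C a * p) = C a * laplacian p := by
  rw [C_mul', map_smul, C_mul']

theorem laplacian_linearForm_mul (x : σ → ℝ) (p : MvPolynomial σ ℝ) :
    laplacian (linearForm x * p) = linearForm x * laplacian p + 2 * directionalDeriv x p := by
  have laplacian_linearForm : laplacian (linearForm x) = 0 := by
    simp [laplacian_apply, pderiv_linearForm]
  rw [laplacian_mul, laplacian_linearForm, directionalDeriv_apply]
  simp only [pderiv_linearForm]
  ring

theorem laplacian_normSqForm : laplacian (normSqForm σ) = C (2 * Fintype.card σ : ℝ) := by
  have two_eq : (2 : MvPolynomial σ ℝ) = C 2 := (map_ofNat C 2).symm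
  simp [laplacian_apply, pderiv_normSqForm, two_eq, mul_comm]

theorem laplacian_normSqForm_mul {p : MvPolynomial σ ℝ} {n : ℕ} (hp : p.IsHomogeneous n)
    (harmonic : laplacian p = 0) :
    laplacian (normSqForm σ * p) = C (2 * Fintype.card σ + 4 * n : ℝ) * p := by
  have cross : ∑ i, pderiv i (normSqForm σ) * pderiv i p = 2 * (n • p) := by
    simp only [pderiv_normSqForm, mul_assoc, ← Finset.mul_sum, hp.sum_X_mul_pderiv]
  rw [laplacian_mul, laplacian_normSqForm, harmonic, cross]
  simp only [map_mul, map_add, map_ofNat, map_natCast, nsmul_eq_mul]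
  ring

theorem isHomogeneous_linearForm (x : σ → ℝ) : (linearForm x).IsHomogeneous 1 :=
  .sum _ _ _ fun i _ => (isHomogeneous_X ℝ i).C_mul (x i)

theorem isHomogeneous_normSqForm : (normSqForm σ).IsHomogeneous 2 :=
  .sum _ _ _ fun i _ => (isHomogeneous_X ℝ i).mul (isHomogeneous_X ℝ i)

theorem zonalPoly_add_two (c : ℝ) (x : σ → ℝ) (k : ℕ) :
    zonalPoly c x (k + 2) = C (2 * (k + 1) + c) * (linearForm x * zonalPoly c x (k + 1)) -
      C ((k + 1) * (k + c) * (x ⬝ᵥ x)) * (normSqForm σ * zonalPoly c x k) := by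
  simp only [zonalPoly, zonal, map_mul, map_add, map_ofNat, map_natCast, map_one]
  ring

theorem zonalPoly_zero (c : ℝ) (x : σ → ℝ) : zonalPoly c x 0 = 1 := rfl

theorem zonalPoly_one (c : ℝ) (x : σ → ℝ) : zonalPoly c x 1 = C c * linearForm x := rfl

theorem eval_zonalPoly (c : ℝ) (x y : σ → ℝ) (k : ℕ) :
    eval y (zonalPoly c x k) = zonal c (x ⬝ᵥ y) ((x ⬝ᵥ x) * (y ⬝ᵥ y)) k := by
  induction k using Nat.twoStepInduction with
  | zero => simp [zonalPoly_zero, zonal]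
  | one => simp [zonalPoly_one, zonal, linearForm, dotProduct]
  | more k ih₀ ih₁ =>
    rw [zonalPoly_add_two, zonal, map_sub, map_mul, map_mul, map_mul (eval y) (C _),
      map_mul (eval y) (normSqForm σ), ih₀, ih₁]
    simp only [linearForm, normSqForm, dotProduct, map_sum, map_mul, eval_C, eval_X]
    ring

theorem isHomogeneous_zonalPoly (c : ℝ) (x : σ → ℝ) (k : ℕ) :
    (zonalPoly c x k).IsHomogeneous k := by
  induction k using Nat.twoStepInduction with
  | zero => exact isHomogeneous_one _ _
  | one => exact (isHomogeneous_linearForm x).C_mul c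
  | more k ih₀ ih₁ =>
    rw [zonalPoly_add_two]
    refine .sub (.C_mul ?_ _) (.C_mul ?_ _)
    · simpa [add_comm, add_left_comm] using (isHomogeneous_linearForm x).mul ih₁
    · simpa [add_comm] using isHomogeneous_normSqForm.mul ih₀

theorem directionalDeriv_zonalPoly_succ (c : ℝ) (x : σ → ℝ) (k : ℕ) :
    directionalDeriv x (zonalPoly c x (k + 1)) =
      C ((k + 1) * (k + c) * (x ⬝ᵥ x)) * zonalPoly c x k := by
  have deriv_C (a : ℝ) : directionalDeriv x (C a) = 0 := (directionalDeriv x).map_algebraMap a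
  induction k using Nat.twoStepInduction with
  | zero => simp [zonalPoly_zero, zonalPoly_one, deriv_C, directionalDeriv_linearForm]
  | one =>
    simp only [show 1 + 1 = 0 + 2 from rfl, zonalPoly_add_two, zonalPoly_zero, zonalPoly_one,
      zero_add, map_sub, Derivation.leibniz, smul_eq_mul, deriv_C, directionalDeriv_linearForm,
      directionalDeriv_normSqForm, Derivation.map_one_eq_zero]
    simp only [map_mul, map_add, map_ofNat, map_one, map_zero, Nat.cast_zero, Nat.cast_one]
    ring
  | more k ih₀ ih₁ =>
    rw [zonalPoly_add_two c x (k + 1)]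
    simp only [map_sub, Derivation.leibniz, smul_eq_mul, deriv_C, directionalDeriv_linearForm,
      directionalDeriv_normSqForm, ih₀, ih₁]
    linear_combination (norm := skip)
      -(C ((k + 2) * (k + 1 + c) * (x ⬝ᵥ x)) * zonalPoly_add_two c x k)
    simp only [map_mul, map_add, map_ofNat, map_natCast, map_one, Nat.cast_add, Nat.cast_one,
      show k + 1 + 1 = k + 2 from rfl, Nat.cast_ofNat]
    ring

theorem laplacian_zonalPoly {c : ℝ} (hc : c + 2 = Fintype.card σ) (x : σ → ℝ) (k : ℕ) :
    laplacian (zonalPoly c x k) = 0 := by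
  induction k using Nat.twoStepInduction with
  | zero => simp [zonalPoly_zero, laplacian_apply]
  | one => simp [zonalPoly_one, laplacian_apply, pderiv_linearForm]
  | more k ih₀ ih₁ =>
    rw [zonalPoly_add_two, map_sub, laplacian_C_mul, laplacian_C_mul, laplacian_linearForm_mul,
      laplacian_normSqForm_mul (isHomogeneous_zonalPoly c x k) ih₀, ih₁,
      directionalDeriv_zonalPoly_succ, ← hc]
    simp only [map_mul, map_add, map_ofNat, map_natCast, map_one]
    ring

/-- The Fischer inner product on polynomials, for which multiplication by a variable is adjoint to
differentiation in it. -/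
noncomputable def fischer : MvPolynomial σ ℝ →ₗ[ℝ] MvPolynomial σ ℝ →ₗ[ℝ] ℝ :=
  (basisMonomials σ ℝ).constr ℝ fun m => (∏ i, ((m i).factorial : ℝ)) • lcoeff ℝ m

theorem fischer_monomial (m : σ →₀ ℕ) (a : ℝ) (q : MvPolynomial σ ℝ) :
    fischer (monomial m a) q = a * ((∏ i, ((m i).factorial : ℝ)) * coeff m q) := by
  have monomial_eq : (monomial m a : MvPolynomial σ ℝ) = a • basisMonomials σ ℝ m := by
    rw [coe_basisMonomials, smul_monomial, smul_eq_mul, mul_one]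
  rw [monomial_eq, fischer, map_smul, Module.Basis.constr_basis]
  simp

theorem fischer_self_nonneg (p : MvPolynomial σ ℝ) : 0 ≤ fischer p p := by
  have expand : fischer p p = ∑ m ∈ p.support, fischer (monomial m (coeff m p)) p := by
    rw [← LinearMap.sum_apply, ← map_sum, ← p.as_sum]
  rw [expand]
  refine Finset.sum_nonneg fun m _ => ?_
  rw [fischer_monomial, mul_left_comm]
  exact mul_nonneg (by positivity) (mul_self_nonneg _)

theorem prod_factorial_add_single (m : σ →₀ ℕ) (i : σ) :
    ∏ j, (((m + Finsupp.single i 1 : σ →₀ ℕ) j).factorial : ℝ) =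
      (m i + 1) * ∏ j, ((m j).factorial : ℝ) := by
  classical
  have factor (j : σ) : (((m + Finsupp.single i 1 : σ →₀ ℕ) j).factorial : ℝ) =
      (if j = i then (m i + 1 : ℝ) else 1) * (m j).factorial := by
    obtain rfl | h := eq_or_ne j i
    · simp [Nat.factorial_succ]
    · simp [h, Finsupp.single_eq_of_ne h]
  simp only [factor, Finset.prod_mul_distrib, Finset.prod_ite_eq', Finset.mem_univ, if_true]

theorem fischer_X_mul (i : σ) (p q : MvPolynomial σ ℝ) :
    fischer (X i * p) q = fischer p (pderiv i q) := by
  induction p using MvPolynomial.induction_on' with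
  | monomial m b =>
    rw [mul_comm, X, monomial_mul, mul_one, fischer_monomial, fischer_monomial, coeff_pderiv,
      prod_factorial_add_single]
    ring
  | add p p' h h' => simp only [mul_add, map_add, LinearMap.add_apply, h, h']

theorem fischer_linearForm_mul (x : σ → ℝ) (p q : MvPolynomial σ ℝ) :
    fischer (linearForm x * p) q = fischer p (directionalDeriv x q) := by
  simp only [linearForm, directionalDeriv_apply, Finset.sum_mul, map_sum, LinearMap.sum_apply,
    C_mul', map_smul, LinearMap.smul_apply, smul_mul_assoc, fischer_X_mul]

theorem fischer_normSqForm_mul (p q : MvPolynomial σ ℝ) :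
    fischer (normSqForm σ * p) q = fischer p (laplacian q) := by
  simp only [normSqForm, laplacian_apply, Finset.sum_mul, map_sum, LinearMap.sum_apply,
    mul_assoc, fischer_X_mul]

theorem fischer_one_of_isHomogeneous_zero (x : σ → ℝ) {q : MvPolynomial σ ℝ}
    (hq : q.IsHomogeneous 0) : fischer 1 q = eval x q := by
  rw [← totalDegree_zero_iff_isHomogeneous, totalDegree_eq_zero_iff_eq_C] at hq
  rw [hq, ← C_1, C_apply, fischer_monomial]
  simp

theorem fischer_zonalPoly (c : ℝ) (x : σ → ℝ) (k : ℕ) {q : MvPolynomial σ ℝ}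
    (harmonic : laplacian q = 0) (hq : q.IsHomogeneous k) :
    fischer (zonalPoly c x k) q =
      (∏ i ∈ Finset.range k, (2 * i + c)) * k.factorial * eval x q := by
  induction k using Nat.twoStepInduction generalizing q with
  | zero => simp [zonalPoly_zero, fischer_one_of_isHomogeneous_zero x hq]
  | one =>
    rw [zonalPoly_one, C_mul', map_smul, LinearMap.smul_apply, ← mul_one (linearForm x),
      fischer_linearForm_mul,
      fischer_one_of_isHomogeneous_zero x (isHomogeneous_directionalDeriv x hq),
      eval_directionalDeriv_self x hq]
    simp
  | more k _ ih₁ =>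
    have harmonic' : laplacian (directionalDeriv x q) = 0 := by
      rw [laplacian_directionalDeriv, harmonic, map_zero]
    rw [zonalPoly_add_two, map_sub, LinearMap.sub_apply, C_mul', C_mul', map_smul, map_smul,
      LinearMap.smul_apply, LinearMap.smul_apply, fischer_linearForm_mul, fischer_normSqForm_mul,
      harmonic, map_zero, ih₁ harmonic' (isHomogeneous_directionalDeriv x hq),
      eval_directionalDeriv_self x hq, Finset.prod_range_succ _ (k + 1),
      Nat.factorial_succ (k + 1)]
    simp only [smul_eq_mul]
    push_cast
    ring

theorem zonal_kernel_nonneg {c : ℝ} (hc : c + 2 = Fintype.card σ) (hpos : 0 < c) {ι : Type*}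
    (s : Finset ι) (v : ι → σ → ℝ) (f : ι → ℝ) (k : ℕ) :
    0 ≤ ∑ a ∈ s, ∑ b ∈ s,
      f a * f b * zonal c (v a ⬝ᵥ v b) ((v a ⬝ᵥ v a) * (v b ⬝ᵥ v b)) k := by
  set A : ℝ := (∏ i ∈ Finset.range k, (2 * i + c)) * k.factorial
  have A_pos : 0 < A := mul_pos (Finset.prod_pos fun i _ => by positivity) (by positivity)
  have reproducing (a b : ι) : fischer (zonalPoly c (v a) k) (zonalPoly c (v b) k) =
      A * zonal c (v a ⬝ᵥ v b) ((v a ⬝ᵥ v a) * (v b ⬝ᵥ v b)) k := by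
    rw [fischer_zonalPoly c _ k (laplacian_zonalPoly hc _ k) (isHomogeneous_zonalPoly c _ k),
      eval_zonalPoly, dotProduct_comm (v b), mul_comm (v b ⬝ᵥ v b)]
  refine (mul_nonneg_iff_of_pos_left A_pos).1 ?_
  refine (fischer_self_nonneg (∑ a ∈ s, f a • zonalPoly c (v a) k)).trans_eq ?_
  simp only [map_sum, map_smul, LinearMap.sum_apply, LinearMap.smul_apply, smul_eq_mul,
    reproducing, Finset.mul_sum]
  rw [Finset.sum_comm]
  exact Finset.sum_congr rfl fun a _ => Finset.sum_congr rfl fun b _ => by ring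

end ZonalHarmonics

section SphericalCodes

open scoped InnerProductSpace
open Module

variable {E : Type*} [NormedAddCommGroup E] [InnerProductSpace ℝ E]

theorem inner_orthogonalProjectionOnto_orthogonal_span {z : E} (hz : ‖z‖ = 1) (x y : E) :
    ⟪(ℝ ∙ z)ᗮ.orthogonalProjectionOnto x, (ℝ ∙ z)ᗮ.orthogonalProjectionOnto y⟫_ℝ =
      ⟪x, y⟫_ℝ - ⟪x, z⟫_ℝ * ⟪y, z⟫_ℝ := by
  rw [Submodule.inner_orthogonalProjectionOnto_eq_of_mem_left, ← Submodule.starProjection_apply,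
    Submodule.starProjection_orthogonal_val, Submodule.starProjection_unit_singleton ℝ hz,
    inner_sub_left, real_inner_smul_left, real_inner_comm x z, real_inner_comm y z]

theorem zonal_kernel_orthogonal_nonneg {c : ℝ} (hc : c + 3 = finrank ℝ E) (hpos : 0 < c) {z : E}
    (hz : ‖z‖ = 1) {s : Finset E} (hs : ∀ x ∈ s, ‖x‖ = 1) (f : E → ℝ) (k : ℕ) :
    0 ≤ ∑ x ∈ s, ∑ y ∈ s, f x * f y *
      zonal c (⟪x, y⟫_ℝ - ⟪x, z⟫_ℝ * ⟪y, z⟫_ℝ) ((1 - ⟪x, z⟫_ℝ ^ 2) * (1 - ⟪y, z⟫_ℝ ^ 2)) k := by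
  have : FiniteDimensional ℝ E := .of_finrank_pos (by rify; linarith)
  let b := stdOrthonormalBasis ℝ (ℝ ∙ z)ᗮ
  let v (x : E) : Fin (finrank ℝ (ℝ ∙ z)ᗮ) → ℝ := b.repr ((ℝ ∙ z)ᗮ.orthogonalProjectionOnto x)
  have dot (x y : E) : v x ⬝ᵥ v y = ⟪x, y⟫_ℝ - ⟪x, z⟫_ℝ * ⟪y, z⟫_ℝ := by
    rw [← inner_orthogonalProjectionOnto_orthogonal_span hz, ← b.repr.inner_map_map,
      EuclideanSpace.inner_eq_star_dotProduct]
    exact dotProduct_comm _ _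
  have dot_self {x : E} (hx : x ∈ s) : v x ⬝ᵥ v x = 1 - ⟪x, z⟫_ℝ ^ 2 := by
    rw [dot, real_inner_self_eq_norm_sq, hs x hx]
    ring
  have card_eq : c + 2 = Fintype.card (Fin (finrank ℝ (ℝ ∙ z)ᗮ)) := by
    have := (ℝ ∙ z).finrank_add_finrank_orthogonal
    rw [finrank_span_singleton (norm_ne_zero_iff.1 (by simp [hz]))] at this
    rw [← this] at hc
    push_cast [Fintype.card_fin] at hc ⊢
    linarith
  refine (zonal_kernel_nonneg card_eq hpos s v f k).trans_eq ?_
  refine Finset.sum_congr rfl fun x hx => Finset.sum_congr rfl fun y hy => ?_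
  rw [dot, dot_self hx, dot_self hy]

/-- The kernel `∑ p, p(u) p(v)` of a sum of squares, given by the list of the functions squared. -/
def squaresKernel (ps : List (ℝ → ℝ)) (u v : ℝ) : ℝ := (ps.map fun p => p u * p v).sum

/-- The Bachoc–Vallentin three-point function of a list of blocks: the `k`-th block is the list of
factors of a positive semidefinite matrix, and multiplies the `k`-th zonal kernel. The arguments
stand for `u = ⟪x, z⟫`, `v = ⟪y, z⟫` and `t = ⟪x, y⟫`. The parameter `k₀` is the degree of the first
block. -/
def threePoint (c : ℝ) (k₀ : ℕ) (blocks : List (List (ℝ → ℝ))) (u v t : ℝ) : ℝ :=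
  ((blocks.zipIdx k₀).map fun (ps, k) =>
    squaresKernel ps u v * zonal c (t - u * v) ((1 - u ^ 2) * (1 - v ^ 2)) k).sum

/-- The determinant of the Gram matrix of three unit vectors with inner products `u`, `v`, `t`. -/
def gramDet (u v t : ℝ) : ℝ := 1 + 2 * u * v * t - u ^ 2 - v ^ 2 - t ^ 2

theorem threePoint_cons (c : ℝ) (k₀ : ℕ) (ps : List (ℝ → ℝ)) (blocks : List (List (ℝ → ℝ)))
    (u v t : ℝ) : threePoint c k₀ (ps :: blocks) u v t =
      squaresKernel ps u v * zonal c (t - u * v) ((1 - u ^ 2) * (1 - v ^ 2)) k₀ +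
        threePoint c (k₀ + 1) blocks u v t := by
  simp [threePoint]

theorem sum_threePoint_nonneg {c : ℝ} (hc : c + 3 = finrank ℝ E) (hpos : 0 < c) {z : E}
    (hz : ‖z‖ = 1) {s : Finset E} (hs : ∀ x ∈ s, ‖x‖ = 1) (k₀ : ℕ)
    (blocks : List (List (ℝ → ℝ))) :
    0 ≤ ∑ x ∈ s, ∑ y ∈ s, threePoint c k₀ blocks ⟪x, z⟫_ℝ ⟪y, z⟫_ℝ ⟪x, y⟫_ℝ := by
  induction blocks generalizing k₀ with
  | nil => simp [threePoint]
  | cons ps blocks ih =>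
    simp only [threePoint_cons, Finset.sum_add_distrib]
    refine add_nonneg ?_ (ih (k₀ + 1))
    induction ps with
    | nil => simp [squaresKernel]
    | cons p ps ih' =>
      simp only [squaresKernel, List.map_cons, List.sum_cons, add_mul, Finset.sum_add_distrib]
      exact add_nonneg (zonal_kernel_orthogonal_nonneg hc hpos hz hs (fun x => p ⟪x, z⟫_ℝ) k₀) ih'

theorem sum_squaresKernel_nonneg {ι : Type*} (s : Finset ι) (u : ι → ℝ)
    (base : List (ℝ × (ℝ → ℝ))) :
    0 ≤ (base.map fun (a, _) => a ^ 2).sum +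
      2 * ∑ x ∈ s, (base.map fun (a, p) => a * p (u x)).sum +
      ∑ x ∈ s, ∑ y ∈ s, squaresKernel (base.map Prod.snd) (u x) (u y) := by
  induction base with
  | nil => simp [squaresKernel]
  | cons ap base ih =>
    obtain ⟨a, p⟩ := ap
    refine (add_nonneg (sq_nonneg (a + ∑ x ∈ s, p (u x))) ih).trans_eq ?_
    simp only [squaresKernel, List.map_cons, List.sum_cons, Finset.sum_add_distrib,
      ← Finset.mul_sum, ← Finset.sum_mul]
    ring

theorem threePoint_inequality {c : ℝ} (hc : c + 3 = finrank ℝ E) (hpos : 0 < c) {z : E}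
    (hz : ‖z‖ = 1) {s : Finset E} (hs : ∀ x ∈ s, ‖x‖ = 1) (base : List (ℝ × (ℝ → ℝ)))
    (blocks : List (List (ℝ → ℝ))) :
    0 ≤ (base.map fun (a, _) => a ^ 2).sum +
      2 * ∑ x ∈ s, (base.map fun (a, p) => a * p ⟪x, z⟫_ℝ).sum +
      ∑ x ∈ s, ∑ y ∈ s,
        threePoint c 0 (base.map Prod.snd :: blocks) ⟪x, z⟫_ℝ ⟪y, z⟫_ℝ ⟪x, y⟫_ℝ := by
  refine (add_nonneg (sum_squaresKernel_nonneg s (fun x => ⟪x, z⟫_ℝ) base)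
    (sum_threePoint_nonneg hc hpos hz hs 1 blocks)).trans_eq ?_
  simp only [threePoint_cons, zonal, mul_one, zero_add, Finset.sum_add_distrib]
  ring

theorem gramDet_inner_nonneg {x y z : E} (hx : ‖x‖ = 1) (hy : ‖y‖ = 1) (hz : ‖z‖ = 1) :
    0 ≤ gramDet ⟪x, z⟫_ℝ ⟪y, z⟫_ℝ ⟪x, y⟫_ℝ := by
  have cauchy_schwarz := real_inner_mul_inner_self_le
    ((ℝ ∙ z)ᗮ.orthogonalProjectionOnto x) ((ℝ ∙ z)ᗮ.orthogonalProjectionOnto y)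
  simp only [inner_orthogonalProjectionOnto_orthogonal_span hz, real_inner_self_eq_norm_sq, hx,
    hy] at cauchy_schwarz
  rw [gramDet]
  linarith

theorem inner_le_half_of_one_le_dist {x y : E} (hx : ‖x‖ = 1) (hy : ‖y‖ = 1)
    (hxy : 1 ≤ dist x y) : ⟪x, y⟫_ℝ ≤ 1 / 2 := by
  have expand := norm_sub_sq_real x y
  rw [dist_eq_norm] at hxy
  rw [hx, hy] at expand
  nlinarith

theorem sum_sum_eq_sum_diag_add_sum_erase {ι : Type*} [DecidableEq ι] (s : Finset ι)
    (f : ι → ι → ℝ) :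
    ∑ x ∈ s, ∑ y ∈ s, f x y = ∑ x ∈ s, f x x + ∑ x ∈ s, ∑ y ∈ s.erase x, f x y := by
  rw [← Finset.sum_add_distrib]
  exact Finset.sum_congr rfl fun x hx => (Finset.add_sum_erase s (f x) hx).symm

theorem sum_distinct_triples_nonpos {ι : Type*} [DecidableEq ι] {s : Finset ι}
    {f : ι → ι → ι → ℝ}
    (hf : ∀ x ∈ s, ∀ y ∈ s, ∀ z ∈ s, x ≠ z → y ≠ z → x ≠ y → f z x y + f x z y + f y z x ≤ 0) :
    ∑ z ∈ s, ∑ x ∈ s.erase z, ∑ y ∈ (s.erase z).erase x, f z x y ≤ 0 := by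
  let g (z x y : ι) : ℝ := if x ≠ z ∧ y ≠ z ∧ x ≠ y then f z x y else 0
  have sum_eq : ∑ z ∈ s, ∑ x ∈ s.erase z, ∑ y ∈ (s.erase z).erase x, f z x y =
      ∑ z ∈ s, ∑ x ∈ s, ∑ y ∈ s, g z x y := by
    refine Finset.sum_congr rfl fun z _ => ?_
    rw [← Finset.sum_erase s (a := z) (by simp [g])]
    refine Finset.sum_congr rfl fun x hx => ?_
    rw [← Finset.sum_erase s (a := z) (by simp [g]),
      ← Finset.sum_erase (s.erase z) (a := x) (by simp [g])]
    refine Finset.sum_congr rfl fun y hy => ?_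
    simp only [Finset.mem_erase] at hx hy
    exact (if_pos ⟨hx.1, hy.2.1, hy.1.symm⟩).symm
  have rotate : ∑ z ∈ s, ∑ x ∈ s, ∑ y ∈ s, g z x y = ∑ z ∈ s, ∑ x ∈ s, ∑ y ∈ s, g x z y :=
    Finset.sum_comm
  have rotate' : ∑ z ∈ s, ∑ x ∈ s, ∑ y ∈ s, g z x y = ∑ z ∈ s, ∑ x ∈ s, ∑ y ∈ s, g y z x :=
    rotate.trans (Finset.sum_congr rfl fun z _ => Finset.sum_comm)
  have symmetrised : ∑ z ∈ s, ∑ x ∈ s, ∑ y ∈ s, (g z x y + g x z y + g y z x) ≤ 0 := by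
    refine Finset.sum_nonpos fun z hz => Finset.sum_nonpos fun x hx =>
      Finset.sum_nonpos fun y hy => ?_
    by_cases h : x ≠ z ∧ y ≠ z ∧ x ≠ y
    · have := hf x hx y hy z hz h.1 h.2.1 h.2.2
      simpa [g, h, h.1.symm, h.2.1.symm, h.2.2.symm] using this
    · grind
  simp only [Finset.sum_add_distrib] at symmetrised
  linarith

theorem card_le_of_threePoint_inequality [DecidableEq E] {S : Finset E}
    (hnorm : ∀ x ∈ S, ‖x‖ = 1) {α : ℝ} (hinner : ∀ x ∈ S, ∀ y ∈ S, x ≠ y → ⟪x, y⟫_ℝ ≤ α)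
    {A m : ℝ} {N : ℕ} {L : ℝ → ℝ} {T : ℝ → ℝ → ℝ → ℝ} (hm : 0 ≤ m) (hA : A < N * m)
    (hL : ∀ u ∈ Set.Icc (-1) α, 2 * L u + T u u 1 ≤ -m)
    (hT : ∀ u ∈ Set.Icc (-1) α, ∀ v ∈ Set.Icc (-1) α, ∀ t ∈ Set.Icc (-1) α,
      0 ≤ gramDet u v t → T u v t + T u t v + T v t u ≤ 0)
    (hpos : ∀ z ∈ S, 0 ≤ A + 2 * ∑ x ∈ S.erase z, L ⟪x, z⟫_ℝ +
      ∑ x ∈ S.erase z, ∑ y ∈ S.erase z, T ⟪x, z⟫_ℝ ⟪y, z⟫_ℝ ⟪x, y⟫_ℝ) :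
    S.card ≤ N := by
  have inner_mem : ∀ x ∈ S, ∀ y ∈ S, x ≠ y → ⟪x, y⟫_ℝ ∈ Set.Icc (-1) α := by
    intro x hx y hy hxy
    have := (abs_le.1 (abs_real_inner_le_norm x y)).1
    rw [hnorm x hx, hnorm y hy] at this
    exact ⟨by linarith, hinner x hx y hy hxy⟩
  let G (z x y : E) : ℝ := T ⟪x, z⟫_ℝ ⟪y, z⟫_ℝ ⟪x, y⟫_ℝ
  have triples : ∑ z ∈ S, ∑ x ∈ S.erase z, ∑ y ∈ (S.erase z).erase x, G z x y ≤ 0 := by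
    refine sum_distinct_triples_nonpos fun x hx y hy z hz hxz hyz hxy => ?_
    have := hT _ (inner_mem x hx z hz hxz) _ (inner_mem y hy z hz hyz) _
      (inner_mem x hx y hy hxy) (gramDet_inner_nonneg (hnorm x hx) (hnorm y hy) (hnorm z hz))
    simp only [G, real_inner_comm x z, real_inner_comm y z, real_inner_comm y x] at this ⊢
    exact this
  have pointwise : ∀ z ∈ S, 0 ≤ A - (S.card - 1) * m +
      ∑ x ∈ S.erase z, ∑ y ∈ (S.erase z).erase x, G z x y := by
    intro z hz
    have pairs : ∑ x ∈ S.erase z, (2 * L ⟪x, z⟫_ℝ + G z x x) ≤ (S.card - 1) * (-m) := by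
      rw [← Finset.cast_card_erase_of_mem hz, ← nsmul_eq_mul]
      refine Finset.sum_le_card_nsmul _ _ _ fun x hx => ?_
      obtain ⟨hxz, hxS⟩ := Finset.mem_erase.1 hx
      simpa [G, hnorm x hxS] using hL _ (inner_mem x hxS z hz hxz)
    have := hpos z hz
    rw [sum_sum_eq_sum_diag_add_sum_erase _ (G z)] at this
    rw [Finset.sum_add_distrib, ← Finset.mul_sum] at pairs
    linarith
  have total : 0 ≤ S.card * (A - (S.card - 1) * m) := by
    have := Finset.sum_nonneg pointwise
    rw [Finset.sum_add_distrib, Finset.sum_const, nsmul_eq_mul] at this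
    linarith
  by_contra! hcard
  have hcard' : (N : ℝ) + 1 ≤ S.card := by exact_mod_cast hcard
  nlinarith [mul_le_mul_of_nonneg_right hcard' hm, N.cast_nonneg (α := ℝ)]

theorem card_le_of_threePoint_certificate {c : ℝ} (hc : c + 3 = finrank ℝ E) (hpos : 0 < c)
    {S : Finset E} (hnorm : ∀ x ∈ S, ‖x‖ = 1) {α : ℝ}
    (hinner : ∀ x ∈ S, ∀ y ∈ S, x ≠ y → ⟪x, y⟫_ℝ ≤ α) {m : ℝ} {N : ℕ}
    (base : List (ℝ × (ℝ → ℝ))) (blocks : List (List (ℝ → ℝ))) (hm : 0 ≤ m)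
    (hA : (base.map fun (a, _) => a ^ 2).sum < N * m)
    (hL : ∀ u ∈ Set.Icc (-1) α, 2 * (base.map fun (a, p) => a * p u).sum +
      threePoint c 0 (base.map Prod.snd :: blocks) u u 1 ≤ -m)
    (hT : ∀ u ∈ Set.Icc (-1) α, ∀ v ∈ Set.Icc (-1) α, ∀ t ∈ Set.Icc (-1) α, 0 ≤ gramDet u v t →
      threePoint c 0 (base.map Prod.snd :: blocks) u v t +
        threePoint c 0 (base.map Prod.snd :: blocks) u t v +
        threePoint c 0 (base.map Prod.snd :: blocks) v t u ≤ 0) :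
    S.card ≤ N := by
  classical
  refine card_le_of_threePoint_inequality hnorm hinner hm hA hL hT fun z hz => ?_
  exact threePoint_inequality hc hpos (hnorm z hz)
    (fun x hx => hnorm x (Finset.mem_of_mem_erase hx)) base blocks

end SphericalCodes

section CoefficientLists

/-- Polynomials over `A` as lists of coefficients, the constant term first. Trailing zeros are not
removed, so that the kernel adds and multiplies polynomials without comparing coefficients.
Nested lists are polynomials in several variables. -/
abbrev CoeffList (A : Type*) := List A

variable {A : Type*}

-- The high priorities take precedence over instances for lists of integers used by `omega`.
scoped instance (priority := high) : Zero (CoeffList A) := ⟨[]⟩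

/-- The sum of two polynomials. -/
def CoeffList.add [Add A] : CoeffList A → CoeffList A → CoeffList A
  | [], q => q
  | p, [] => p
  | a :: p, b :: q => (a + b) :: CoeffList.add p q

scoped instance (priority := high) [Add A] : Add (CoeffList A) := ⟨CoeffList.add⟩

/-- The product of two polynomials. -/
def CoeffList.mul [Zero A] [Add A] [Mul A] (p q : CoeffList A) : CoeffList A :=
  p.foldr (fun a r => q.map (a * ·) + 0 :: r) 0

scoped instance (priority := high) [Zero A] [Add A] [Mul A] : Mul (CoeffList A) := ⟨CoeffList.mul⟩

scoped instance (priority := high) [IntCast A] : IntCast (CoeffList A) := ⟨fun n => [(n : A)]⟩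

/-- The exchange of the two variables of a polynomial whose coefficients are polynomials. -/
def CoeffList.transpose [Zero A] [Add A] (p : CoeffList (CoeffList A)) :
    CoeffList (CoeffList A) :=
  p.foldr (fun a r => a.map (fun b => [b]) + r.map (0 :: ·)) 0

/-- Horner evaluation at `x` of a polynomial whose coefficients are interpreted by `e`. -/
def horner {A R : Type*} [Zero R] [Add R] [Mul R] (e : A → R) (x : R) (p : CoeffList A) : R :=
  p.foldr (fun a r => e a + x * r) 0

theorem horner_cons {R : Type*} [Zero R] [Add R] [Mul R] (e : A → R) (x : R) (a : A)
    (p : CoeffList A) : horner e x (a :: p) = e a + x * horner e x p := rfl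

/-- Compatibility of a map with the operations of `A`, which need not satisfy the ring axioms: they
fail for coefficient lists, because of the trailing zeros. -/
structure IsArithHom {A R : Type*} [Zero A] [Add A] [Mul A] [IntCast A] [CommRing R] (e : A → R) :
    Prop where
  map_zero : e 0 = 0
  map_add (a b : A) : e (a + b) = e a + e b
  map_mul (a b : A) : e (a * b) = e a * e b
  map_intCast (n : ℤ) : e n = n

theorem isArithHom_intCast {R : Type*} [CommRing R] : IsArithHom (Int.cast : ℤ → R) :=
  ⟨Int.cast_zero, Int.cast_add, Int.cast_mul, fun _ => rfl⟩

variable {R : Type*} [CommRing R] {e : A → R}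

theorem horner_singleton (x : R) (a : A) : horner e x [a] = e a := by
  simp [horner]

theorem horner_map {B : Type*} {f : A → B} {e' : B → R} {r : R} (h : ∀ a, e' (f a) = r * e a)
    (x : R) (p : CoeffList A) : horner e' x (p.map f) = r * horner e x p := by
  induction p with
  | nil => exact (mul_zero r).symm
  | cons a p ih => rw [List.map_cons, horner_cons, horner_cons, ih, h]; ring

theorem horner_eq_zero (x : R) {p : CoeffList A} (h : ∀ a ∈ p, e a = 0) :
    horner e x p = 0 := by
  induction p with
  | nil => rfl
  | cons a p ih =>
    rw [List.forall_mem_cons] at h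
    rw [horner_cons, h.1, ih h.2, mul_zero, add_zero]

theorem horner_add [Add A] (he : ∀ a b, e (a + b) = e a + e b) (x : R) (p q : CoeffList A) :
    horner e x (p + q) = horner e x p + horner e x q := by
  change horner e x (CoeffList.add p q) = _
  induction p, q using CoeffList.add.induct with
  | case1 q => simp [CoeffList.add, horner]
  | case2 p _ => cases p <;> simp [CoeffList.add, horner]
  | case3 a p b q ih => rw [CoeffList.add, horner_cons, horner_cons, horner_cons, ih, he]; ring

namespace IsArithHom

variable [Zero A] [Add A] [Mul A] [IntCast A] (he : IsArithHom e)
include he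

theorem horner_zero_cons (x : R) (p : CoeffList A) :
    horner e x (0 :: p) = x * horner e x p := by
  rw [horner_cons, he.map_zero, zero_add]

theorem horner_mul (x : R) (p q : CoeffList A) :
    horner e x (p * q) = horner e x p * horner e x q := by
  induction p with
  | nil => exact (zero_mul _).symm
  | cons a p ih =>
    change horner e x (q.map (a * ·) + 0 :: (p * q)) = _
    rw [horner_add he.map_add, horner_map (he.map_mul a), he.horner_zero_cons, ih, horner_cons]
    ring

protected theorem horner (x : R) : IsArithHom (horner e x) where
  map_zero := rfl
  map_add := horner_add he.map_add x
  map_mul := he.horner_mul x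
  map_intCast n := (horner_singleton x _).trans (he.map_intCast n)

theorem map_horner_intCast (x : A) (p : CoeffList ℤ) :
    e (horner Int.cast x p) = horner Int.cast (e x) p := by
  induction p with
  | nil => exact he.map_zero
  | cons a p ih =>
    change e (a + x * horner Int.cast x p) = _
    rw [he.map_add, he.map_mul, he.map_intCast, ih, horner_cons]

theorem horner_transpose (x y : R) (p : CoeffList (CoeffList A)) :
    horner (horner e x) y (CoeffList.transpose p) = horner (horner e y) x p := by
  induction p with
  | nil => rfl
  | cons a p ih =>
    change horner (horner e x) y
      (a.map (fun b => [b]) + (CoeffList.transpose p).map (0 :: ·)) = _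
    rw [horner_add (he.horner x).map_add,
      horner_map (e := e) (r := 1) fun a => by rw [horner_singleton, one_mul],
      horner_map (he.horner_zero_cons x), ih, one_mul, horner_cons]

end IsArithHom

end CoefficientLists

section ThreePointExpansion

variable {A : Type*} [Zero A] [Add A] [Mul A] [IntCast A]

/-- The kernel `∑ p, p(x) p(y)`, evaluated in `A`. -/
def expandSquares (ps : List (CoeffList ℤ)) (x y : A) : A :=
  ps.foldr (fun p r => horner Int.cast x p * horner Int.cast y p + r) 0

/-- The sum `∑ (a, p), a p(x)`, evaluated in `A`. -/
def expandLinear (base : List (ℤ × CoeffList ℤ)) (x : A) : A :=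
  base.foldr (fun ap r => (ap.1 : A) * horner Int.cast x ap.2 + r) 0

/-- The sum of the products of the kernels of `blocks` with the sequence of zonal polynomials, run
from degree `k` on by means of the recurrence; `q` and `q'` are the terms of degrees `k` and
`k + 1`. -/
def expandBlocks (c : ℤ) (x y w r : A) : ℤ → A → A → List (List (CoeffList ℤ)) → A
  | _, _, _, [] => 0
  | k, q, q', ps :: blocks =>
    q * expandSquares ps x y + expandBlocks c x y w r (k + 1) q'
      (((2 * (k + 1) + c : ℤ) : A) * (w * q') + ((-((k + 1) * (k + c)) : ℤ) : A) * (r * q)) blocks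

/-- The three-point function `threePoint c 0` of polynomial blocks, evaluated in `A` in terms of the
shifted variables `x = 1 + u`, `y = 1 + v`, `z = 1 + t`. -/
def expandThreePoint (c : ℤ) (blocks : List (List (CoeffList ℤ))) (x y z : A) : A :=
  let w := z + (x + (y + (((-1 : ℤ) : A) * (x * y) + ((-2 : ℤ) : A))))
  let r := x * (((2 : ℤ) : A) + ((-1 : ℤ) : A) * x) * (y * (((2 : ℤ) : A) + ((-1 : ℤ) : A) * y))
  expandBlocks c x y w r 0 ((1 : ℤ) : A) ((c : A) * w) blocks

/-- The real function `u ↦ p(1 + u)`. -/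
def shiftedEval (p : CoeffList ℤ) (u : ℝ) : ℝ := horner Int.cast (1 + u) p

namespace IsArithHom

variable {e : A → ℝ} (he : IsArithHom e) {u v t : ℝ}
include he

theorem map_expandSquares {x y : A} (hx : e x = 1 + u) (hy : e y = 1 + v)
    (ps : List (CoeffList ℤ)) :
    e (expandSquares ps x y) = squaresKernel (ps.map shiftedEval) u v := by
  induction ps with
  | nil => exact he.map_zero
  | cons p ps ih =>
    change e (_ + expandSquares ps x y) = _
    rw [he.map_add, he.map_mul, he.map_horner_intCast, he.map_horner_intCast, hx, hy, ih]
    rfl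

theorem map_expandLinear {x : A} (hx : e x = 1 + u) (base : List (ℤ × CoeffList ℤ)) :
    e (expandLinear base x) = (base.map fun (a, p) => (a : ℝ) * shiftedEval p u).sum := by
  induction base with
  | nil => exact he.map_zero
  | cons ap base ih =>
    change e (_ + expandLinear base x) = _
    rw [he.map_add, he.map_mul, he.map_intCast, he.map_horner_intCast, hx, ih, List.map_cons,
      List.sum_cons]
    rfl

theorem map_expandBlocks {c : ℤ} {x y w r : A} (hx : e x = 1 + u) (hy : e y = 1 + v)
    (hw : e w = t - u * v) (hr : e r = (1 - u ^ 2) * (1 - v ^ 2))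
    (blocks : List (List (CoeffList ℤ))) {k : ℕ} {q q' : A}
    (hq : e q = zonal (c : ℝ) (e w) (e r) k) (hq' : e q' = zonal (c : ℝ) (e w) (e r) (k + 1)) :
    e (expandBlocks c x y w r k q q' blocks) =
      threePoint c k (blocks.map (List.map shiftedEval)) u v t := by
  induction blocks generalizing k q q' with
  | nil => exact he.map_zero
  | cons ps blocks ih =>
    rw [List.map_cons, threePoint_cons, expandBlocks, he.map_add, he.map_mul,
      he.map_expandSquares hx hy, hq, hw, hr, mul_comm, ← Nat.cast_succ, ih hq']
    rw [he.map_add, he.map_mul, he.map_mul, he.map_mul, he.map_mul, he.map_intCast,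
      he.map_intCast, hq, hq', zonal]
    push_cast
    ring

theorem map_expandThreePoint {c : ℤ} {x y z : A} (hx : e x = 1 + u) (hy : e y = 1 + v)
    (hz : e z = 1 + t) (blocks : List (List (CoeffList ℤ))) :
    e (expandThreePoint c blocks x y z) =
      threePoint c 0 (blocks.map (List.map shiftedEval)) u v t := by
  refine he.map_expandBlocks (k := 0) hx hy ?_ ?_ blocks ?_ ?_
  · simp only [he.map_add, he.map_mul, he.map_intCast, hx, hy, hz]
    push_cast
    ring
  · simp only [he.map_add, he.map_mul, he.map_intCast, hx, hy]
    push_cast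
    ring
  · rw [he.map_intCast, Int.cast_one, zonal]
  · rw [he.map_mul, he.map_intCast, zonal]

end IsArithHom

end ThreePointExpansion

section Bernstein

open Polynomial Finset

/-- The weight of `x ^ i` in the Bernstein form of degree `n` of a polynomial on the interval
`[a / D, b / D]`: if `D x = a s + b t` with `s + t = 1`, then `D ^ n x ^ i` is the homogenised
weight `(a s + b t) ^ i (D s + D t) ^ (n - i)`. -/
noncomputable def weightPoly (D a b n i : ℕ) : ℕ[X] :=
  (C a + C b * X) ^ i * (C D + C D * X) ^ (n - i)

/-- The value of `weightPoly` at the natural number `B`, in a form suited to kernel evaluation. -/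
def weight (D a b n B i : ℕ) : ℕ := (a + b * B) ^ i * (D + D * B) ^ (n - i)

variable {D a b n i : ℕ}

theorem eval_weightPoly (B : ℕ) : (weightPoly D a b n i).eval B = weight D a b n B i := by
  simp [weightPoly, weight]

theorem natDegree_add_mul_X_pow_le (c d k : ℕ) : ((C c + C d * X) ^ k : ℕ[X]).natDegree ≤ k := by
  simpa using natDegree_pow_le_of_le k (show (C c + C d * X : ℕ[X]).natDegree ≤ 1 by compute_degree)

theorem natDegree_weightPoly_le (hi : i ≤ n) : (weightPoly D a b n i).natDegree ≤ n := by
  simpa [weightPoly, hi] using natDegree_mul_le_of_le (natDegree_add_mul_X_pow_le a b i)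
    (natDegree_add_mul_X_pow_le D D (n - i))

theorem aeval_homogenize_eq_sum (p : ℕ[X]) (n : ℕ) (s t : ℝ) :
    MvPolynomial.aeval ![t, s] (p.homogenize n) =
      ∑ j ∈ range (n + 1), p.coeff j * (s ^ (n - j) * t ^ j) := by
  rw [homogenize, map_sum, ← Nat.sum_antidiagonal_eq_sum_range_succ
    (fun j k => (p.coeff j : ℝ) * (s ^ k * t ^ j))]
  refine sum_congr rfl fun ⟨j, k⟩ _ => ?_
  simp [MvPolynomial.aeval_monomial, mul_comm]

theorem aeval_homogenize_add_mul_X_pow (c d k : ℕ) (s t : ℝ) :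
    MvPolynomial.aeval ![t, s] (((C c + C d * X) ^ k : ℕ[X]).homogenize k) =
      (c * s + d * t) ^ k := by
  have := homogenize_finsetProd (s := range k) (p := fun _ => (C c + C d * X : ℕ[X]))
    (n := fun _ => 1) fun _ _ => by compute_degree
  rw [prod_const, prod_const, card_range, sum_const, card_range, smul_eq_mul, mul_one] at this
  rw [this, map_pow, homogenize_add, homogenize_C, homogenize_C_mul, homogenize_X one_ne_zero]
  simp

theorem sum_coeff_weightPoly_mul (hi : i ≤ n) {x s t : ℝ} (hst : s + t = 1)
    (hx : D * x = a * s + b * t) :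
    ∑ j ∈ range (n + 1), ((weightPoly D a b n i).coeff j : ℝ) * (s ^ (n - j) * t ^ j) =
      D ^ n * x ^ i := by
  have hom := homogenize_mul _ _ (natDegree_add_mul_X_pow_le a b i)
    (natDegree_add_mul_X_pow_le D D (n - i))
  rw [Nat.add_sub_cancel' hi] at hom
  rw [← aeval_homogenize_eq_sum, weightPoly, hom, map_mul, aeval_homogenize_add_mul_X_pow,
    aeval_homogenize_add_mul_X_pow, ← mul_add, hst, ← hx, mul_pow, mul_one, mul_right_comm,
    ← pow_add, Nat.add_sub_cancel' hi]

theorem sum_coeff_weightPoly_le (hi : i ≤ n) {K : ℕ} (hab : a + b ≤ K) (hD : D + D ≤ K) :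
    ∑ j ∈ range (n + 1), (weightPoly D a b n i).coeff j ≤ K ^ n := by
  have eval_one := eval_eq_sum_range' (Nat.lt_succ_of_le (natDegree_weightPoly_le
    (D := D) (a := a) (b := b) hi)) 1
  simp only [one_pow, mul_one] at eval_one
  calc ∑ j ∈ range (n + 1), (weightPoly D a b n i).coeff j = (a + b) ^ i * (D + D) ^ (n - i) := by
        rw [← eval_one, eval_weightPoly, weight, mul_one, mul_one]
    _ ≤ K ^ i * K ^ (n - i) := by gcongr
    _ = K ^ n := by rw [← pow_add, Nat.add_sub_cancel' hi]

theorem coeff_weightPoly_le (hi : i ≤ n) {K j : ℕ} (hj : j ≤ n) (hab : a + b ≤ K)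
    (hD : D + D ≤ K) : (weightPoly D a b n i).coeff j ≤ K ^ n :=
  (single_le_sum (fun _ _ => zero_le) (mem_range.2 (Nat.lt_succ_of_le hj))).trans
    (sum_coeff_weightPoly_le hi hab hD)

theorem sum_mul_pow_div_pow_mod {B : ℕ} {K : ℕ} {d : ℕ → ℕ} (hd : ∀ k < K, d k < B) {j : ℕ}
    (hj : j < K) : (∑ k ∈ range K, d k * B ^ k) / B ^ j % B = d j := by
  induction K generalizing d j with
  | zero => omega
  | succ K ih =>
    have hB : 0 < B := (Nat.zero_le _).trans_lt (hd j hj)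
    have split : ∑ k ∈ range (K + 1), d k * B ^ k = d 0 + B * ∑ k ∈ range K, d (k + 1) * B ^ k := by
      rw [sum_range_succ', mul_sum, add_comm, pow_zero, mul_one]
      exact congrArg _ (sum_congr rfl fun _ _ => by ring)
    have h0 := hd 0 K.succ_pos
    cases j with
    | zero => rw [split, pow_zero, Nat.div_one, Nat.add_mul_mod_self_left, Nat.mod_eq_of_lt h0]
    | succ j =>
      rw [split, pow_succ', ← Nat.div_div_eq_div_mul, Nat.add_mul_div_left _ _ hB,
        Nat.div_eq_of_lt h0, zero_add]
      exact ih (fun k hk => hd (k + 1) (by omega)) (by omega)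

theorem weight_div_pow_mod (hi : i ≤ n) {B j : ℕ} (hj : j ≤ n)
    (hB : ∀ k ≤ n, (weightPoly D a b n i).coeff k < B) :
    weight D a b n B i / B ^ j % B = (weightPoly D a b n i).coeff j := by
  rw [← eval_weightPoly, eval_eq_sum_range' (Nat.lt_succ_of_le (natDegree_weightPoly_le hi))]
  exact sum_mul_pow_div_pow_mod (fun k hk => hB k (Nat.lt_succ_iff.1 hk)) (Nat.lt_succ_of_le hj)

theorem sum_mul_pow_nonneg_of_bernstein {x s t : ℝ} (hs : 0 ≤ s) (ht : 0 ≤ t) (hst : s + t = 1)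
    (hx : D * x = a * s + b * t) (hD : 0 < D) {v : ℕ → ℝ}
    (hv : ∀ j ≤ n, 0 ≤ ∑ i ∈ range (n + 1), v i * (weightPoly D a b n i).coeff j) :
    0 ≤ ∑ i ∈ range (n + 1), v i * x ^ i := by
  suffices 0 ≤ D ^ n * ∑ i ∈ range (n + 1), v i * x ^ i from
    nonneg_of_mul_nonneg_right this (by positivity)
  calc 0 ≤ ∑ j ∈ range (n + 1), (∑ i ∈ range (n + 1), v i * (weightPoly D a b n i).coeff j) *
        (s ^ (n - j) * t ^ j) :=
        sum_nonneg fun j hj => mul_nonneg (hv j (Nat.lt_succ_iff.1 (mem_range.1 hj)))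
          (by positivity)
    _ = ∑ i ∈ range (n + 1), v i * ∑ j ∈ range (n + 1),
        (weightPoly D a b n i).coeff j * (s ^ (n - j) * t ^ j) := by
        simp only [sum_mul, mul_sum, mul_assoc]
        exact sum_comm
    _ = ∑ i ∈ range (n + 1), v i * (D ^ n * x ^ i) := sum_congr rfl fun i hi => by
        rw [sum_coeff_weightPoly_mul (Nat.lt_succ_iff.1 (mem_range.1 hi)) hst hx]
    _ = D ^ n * ∑ i ∈ range (n + 1), v i * x ^ i := by
        rw [mul_sum]
        exact sum_congr rfl fun i _ => mul_left_comm _ _ _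

end Bernstein

section Packing

open Finset

/-- `N` packs an integer combination of value `v` of the real numbers `w i`: the integer `N` is the
combination with the same coefficients of the numbers `W i`, which will be distinct powers of `2`.
The absolute values of the coefficients add up to at most `M`; for `M` small enough, `N` determines
them. -/
def IsPacked {ι : Type*} [Fintype ι] (W : ι → ℤ) (w : ι → ℝ) (M : ℕ) (N : ℤ) (v : ℝ) : Prop :=
  ∃ a : ι → ℤ, ∑ i, |a i| ≤ M ∧ N = ∑ i, a i * W i ∧ v = ∑ i, a i * w i

namespace IsPacked

variable {ι κ : Type*} [Fintype ι] [Fintype κ] {W : ι → ℤ} {w : ι → ℝ} {W' : κ → ℤ} {w' : κ → ℝ}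
  {M M' : ℕ} {N N' : ℤ} {v v' : ℝ}

theorem zero : IsPacked W w 0 0 0 := ⟨0, by simp, by simp, by simp⟩

theorem intCast (c : ℤ) : IsPacked (fun _ : Unit => 1) (fun _ => 1) c.natAbs c c :=
  ⟨fun _ => c, by simp, by simp, by simp⟩

theorem mono (h : IsPacked W w M N v) (hM : M ≤ M') : IsPacked W w M' N v := by
  obtain ⟨a, ha, hN, hv⟩ := h
  exact ⟨a, ha.trans (mod_cast hM), hN, hv⟩

theorem add (h : IsPacked W w M N v) (h' : IsPacked W w M' N' v') :
    IsPacked W w (M + M') (N + N') (v + v') := by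
  obtain ⟨a, ha, rfl, rfl⟩ := h
  obtain ⟨b, hb, rfl, rfl⟩ := h'
  refine ⟨a + b, ?_, ?_, ?_⟩
  · calc ∑ i, |(a + b) i| ≤ ∑ i, (|a i| + |b i|) := sum_le_sum fun i _ => abs_add_le _ _
      _ ≤ (M + M' : ℕ) := by rw [sum_add_distrib]; push_cast; gcongr
  all_goals simp [add_mul, sum_add_distrib]

theorem natCast_mul (h : IsPacked W w M N v) (c : ℕ) : IsPacked W w (c * M) (c * N) (c * v) := by
  obtain ⟨a, ha, rfl, rfl⟩ := h
  refine ⟨fun i => c * a i, ?_, ?_, ?_⟩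
  · simp only [abs_mul, Nat.abs_cast, ← mul_sum]
    push_cast
    gcongr
  all_goals simp [mul_sum, mul_assoc]

theorem sum {τ : Type*} {s : Finset τ} {M : τ → ℕ} {N : τ → ℤ} {v : τ → ℝ}
    (h : ∀ k ∈ s, IsPacked W w (M k) (N k) (v k)) :
    IsPacked W w (∑ k ∈ s, M k) (∑ k ∈ s, N k) (∑ k ∈ s, v k) := by
  induction s using Finset.cons_induction with
  | empty => exact zero
  | cons k s hk ih =>
    simp only [sum_cons]
    exact (h k (mem_cons_self k s)).add (ih fun j hj => h j (mem_cons_of_mem hj))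

theorem mul (h : IsPacked W w M N v) (h' : IsPacked W' w' M' N' v') :
    IsPacked (fun p : ι × κ => W p.1 * W' p.2) (fun p => w p.1 * w' p.2) (M * M') (N * N')
      (v * v') := by
  obtain ⟨a, ha, rfl, rfl⟩ := h
  obtain ⟨b, hb, rfl, rfl⟩ := h'
  refine ⟨fun p => a p.1 * b p.2, ?_, ?_, ?_⟩
  · simp only [abs_mul, Fintype.sum_prod_type, ← Fintype.sum_mul_sum]
    push_cast
    gcongr
  all_goals
    rw [Fintype.sum_mul_sum, Fintype.sum_prod_type]
    push_cast
    exact sum_congr rfl fun i _ => sum_congr rfl fun j _ => mul_mul_mul_comm _ _ _ _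

end IsPacked

theorem isPacked_weight {D a b n i K : ℕ} (hi : i ≤ n) (hab : a + b ≤ K) (hD : D + D ≤ K)
    {x s t : ℝ} (hst : s + t = 1) (hx : D * x = a * s + b * t) (B : ℕ) :
    IsPacked (fun j : Fin (n + 1) => (B : ℤ) ^ (j : ℕ)) (fun j => s ^ (n - j : ℕ) * t ^ (j : ℕ))
      (K ^ n) (weight D a b n B i) (D ^ n * x ^ i) := by
  refine ⟨fun j => (weightPoly D a b n i).coeff j, ?_, ?_, ?_⟩
  · simp only [Nat.abs_cast]
    exact_mod_cast (Fin.sum_univ_eq_sum_range (weightPoly D a b n i).coeff (n + 1)).trans_le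
      (sum_coeff_weightPoly_le hi hab hD)
  · rw [← eval_weightPoly, Polynomial.eval_eq_sum_range' (Nat.lt_succ_of_le
      (natDegree_weightPoly_le hi)), ← Fin.sum_univ_eq_sum_range]
    push_cast
    rfl
  · rw [← sum_coeff_weightPoly_mul hi hst hx, ← Fin.sum_univ_eq_sum_range]
    push_cast
    rfl

/-- A number with all of its `K` digits in base `2 ^ B` equal to `2 ^ (B - 1)`. -/
def signMask (B K : ℕ) : ℕ := 2 ^ (B - 1) * ((2 ^ (B * K) - 1) / (2 ^ B - 1))

/-- The test for the signs of all coefficients packed into `N` in base `2 ^ B`: adding `signMask`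
makes the digits nonnegative without carries, and the top bit of a digit is then set if and only if
the coefficient is nonnegative. -/
def signTest (B K : ℕ) (N : ℤ) : Bool :=
  (N + signMask B K).toNat &&& signMask B K == signMask B K

theorem signMask_eq_sum {B : ℕ} (hB : 0 < B) (K : ℕ) :
    signMask B K = ∑ k ∈ range K, 2 ^ (B - 1) * (2 ^ B) ^ k := by
  rw [signMask, pow_mul, ← Nat.geomSum_eq (Nat.one_lt_two_pow hB.ne'), mul_sum]

theorem testBit_digit {B n k : ℕ} (hB : 0 < B) :
    (n / (2 ^ B) ^ k % 2 ^ B).testBit (B - 1) = n.testBit (B - 1 + B * k) := by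
  rw [Nat.testBit_mod_two_pow, ← pow_mul, Nat.testBit_div_two_pow]
  simp [hB]

theorem two_pow_le_of_and_signMask {B K : ℕ} (hB : 0 < B) {d : ℕ → ℕ} (hd : ∀ k < K, d k < 2 ^ B)
    (h : (∑ k ∈ range K, d k * (2 ^ B) ^ k) &&& signMask B K = signMask B K) {k : ℕ} (hk : k < K) :
    2 ^ (B - 1) ≤ d k := by
  refine Nat.ge_two_pow_of_testBit ?_
  have mask_bit : (signMask B K).testBit (B - 1 + B * k) = true := by
    rw [← testBit_digit hB, signMask_eq_sum hB, sum_mul_pow_div_pow_mod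
      (fun _ _ => Nat.pow_lt_pow_right one_lt_two (Nat.sub_lt hB one_pos)) hk,
      Nat.testBit_two_pow_self]
  rw [← h, Nat.testBit_and, Bool.and_eq_true, ← testBit_digit hB,
    sum_mul_pow_div_pow_mod hd hk] at mask_bit
  exact mask_bit.1

theorem IsPacked.nonneg_of_signTest {ι : Type*} [Fintype ι] {B K : ℕ} {pos : ι → ℕ}
    (hinj : pos.Injective) (hpos : ∀ i, pos i < K) {w : ι → ℝ} (hw : ∀ i, 0 ≤ w i) {M : ℕ}
    (hM : M < 2 ^ (B - 1)) (hB : 0 < B) {N : ℤ} {v : ℝ}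
    (h : IsPacked (fun i => (2 ^ B) ^ pos i) w M N v) (ht : signTest B K N = true) : 0 ≤ v := by
  classical
  obtain ⟨a, ha, hN, rfl⟩ := h
  let c (k : ℕ) : ℤ := ∑ i with pos i = k, a i
  have c_pos (i : ι) : c (pos i) = a i := by
    simp only [c, hinj.eq_iff, sum_filter, sum_ite_eq', mem_univ, if_true]
  have abs_c_lt (k : ℕ) : |c k| < 2 ^ (B - 1) := by
    calc |c k| ≤ ∑ i with pos i = k, |a i| := abs_sum_le_sum_abs _ _
      _ ≤ ∑ i, |a i| := sum_le_univ_sum_of_nonneg fun _ => abs_nonneg _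
      _ < 2 ^ (B - 1) := ha.trans_lt (mod_cast hM)
  have two_pow : (2 : ℤ) ^ B = 2 ^ (B - 1) + 2 ^ (B - 1) := by
    rw [← two_mul, ← pow_succ', Nat.sub_add_cancel hB]
  let d (k : ℕ) : ℕ := (c k + 2 ^ (B - 1)).toNat
  have d_eq (k : ℕ) : (d k : ℤ) = c k + 2 ^ (B - 1) :=
    Int.toNat_of_nonneg (by linarith [(abs_lt.1 (abs_c_lt k)).1])
  have d_lt (k : ℕ) : d k < 2 ^ B := by
    zify
    rw [d_eq, two_pow]
    linarith [(abs_lt.1 (abs_c_lt k)).2]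
  have shifted : N + signMask B K = (∑ k ∈ range K, d k * (2 ^ B) ^ k : ℕ) := by
    rw [signMask_eq_sum hB, hN, ← sum_fiberwise_of_maps_to (t := range K) (g := pos)
      fun i _ => mem_range.2 (hpos i)]
    push_cast
    rw [← sum_add_distrib]
    refine sum_congr rfl fun k _ => ?_
    rw [d_eq, add_mul, sum_mul]
    congr 1
    exact sum_congr rfl fun i hi => by rw [(mem_filter.1 hi).2]
  rw [signTest, shifted, Int.toNat_natCast, beq_iff_eq] at ht
  refine sum_nonneg fun i _ => mul_nonneg ?_ (hw i)
  have := two_pow_le_of_and_signMask hB (fun k _ => d_lt k) ht (hpos i)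
  zify at this
  rw [d_eq, c_pos] at this
  exact_mod_cast (by linarith : 0 ≤ a i)

end Packing

section TrivariatePolynomials

/-- Polynomials in `x`, `y`, `z` with integer coefficients, as polynomials in `z` over polynomials
in `y` over polynomials in `x`. -/
abbrev TriPoly := CoeffList (CoeffList (CoeffList ℤ))

namespace TriPoly

/-- The first variable. -/
def X : TriPoly := [[[0, 1]]]

/-- The second variable. -/
def Y : TriPoly := [[[], [1]]]

/-- The third variable. -/
def Z : TriPoly := [[], [[1]]]

/-- The value of a polynomial in three variables at a point. -/
def eval (x y z : ℝ) (p : TriPoly) : ℝ := horner (horner (horner Int.cast x) y) z p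

/-- The sum of the absolute values of the coefficients. -/
def norm (p : TriPoly) : ℕ := horner (horner (horner Int.natAbs 1) 1) 1 p

/-- The degree in each of the variables is at most `n`. -/
abbrev DegreeLE (n : ℕ) (p : TriPoly) : Prop :=
  p.length ≤ n + 1 ∧ ∀ q ∈ p, q.length ≤ n + 1 ∧ ∀ r ∈ q, r.length ≤ n + 1

/-- The test that all coefficients vanish. -/
def isZero (p : TriPoly) : Bool := p.all (·.all (·.all (· == 0)))

/-- The sum of the polynomials `p(x, y, z)`, `p(x, z, y)` and `p(y, z, x)`. -/
def symmetricSum (p : TriPoly) : TriPoly :=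
  p + (CoeffList.transpose p + (CoeffList.transpose p).map CoeffList.transpose)

theorem isArithHom_eval (x y z : ℝ) : IsArithHom (eval x y z) :=
  ((isArithHom_intCast.horner x).horner y).horner z

theorem eval_eq_zero_of_isZero {p : TriPoly} (h : p.isZero = true) (x y z : ℝ) :
    p.eval x y z = 0 := by
  simp only [isZero, List.all_eq_true, beq_iff_eq] at h
  exact horner_eq_zero z fun q hq => horner_eq_zero y fun r hr => horner_eq_zero x fun c hc => by
    rw [h q hq r hr c hc, Int.cast_zero]

theorem eval_symmetricSum (x y z : ℝ) (p : TriPoly) :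
    (symmetricSum p).eval x y z = p.eval x y z + p.eval x z y + p.eval y z x := by
  have swap (x y z : ℝ) : TriPoly.eval x y z (CoeffList.transpose p) = p.eval x z y :=
    (isArithHom_intCast.horner x).horner_transpose y z p
  have rotate : TriPoly.eval x y z ((CoeffList.transpose p).map CoeffList.transpose) =
      TriPoly.eval y x z (CoeffList.transpose p) :=
    (horner_map (r := 1) (fun q => by rw [isArithHom_intCast.horner_transpose, one_mul]) z _).trans
      (one_mul _)
  rw [symmetricSum, (isArithHom_eval x y z).map_add, (isArithHom_eval x y z).map_add, rotate, swap,
    swap, add_assoc]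

theorem eval_expandThreePoint (c : ℤ) (blocks : List (List (CoeffList ℤ))) (u v t : ℝ) :
    TriPoly.eval (1 + u) (1 + v) (1 + t) (expandThreePoint c blocks X Y Z) =
      threePoint c 0 (blocks.map (List.map shiftedEval)) u v t :=
  (isArithHom_eval _ _ _).map_expandThreePoint (by simp [eval, X, horner])
    (by simp [eval, Y, horner]) (by simp [eval, Z, horner]) blocks

end TriPoly

end TrivariatePolynomials

section DotProducts

open Finset

variable {A : Type*} [Zero A]

theorem forall_getD_zero {P : A → Prop} (h0 : P 0) {l : CoeffList A} (h : ∀ p ∈ l, P p) (i : ℕ) :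
    P (l.getD i 0) := by
  rcases lt_or_ge i l.length with hi | hi
  · rw [List.getD_eq_getElem l 0 hi]
    exact h _ (List.getElem_mem hi)
  · rwa [List.getD_eq_default l 0 hi]

theorem horner_eq_sum {R : Type*} [CommSemiring R] {e : A → R} (he : e 0 = 0) (x : R)
    {l : CoeffList A} {n : ℕ} (hl : l.length ≤ n) :
    horner e x l = ∑ i ∈ range n, e (l.getD i 0) * x ^ i := by
  induction l generalizing n with
  | nil => simp [horner, he]
  | cons a l ih =>
    obtain ⟨n, rfl⟩ := Nat.exists_eq_add_one.2 (Nat.zero_lt_of_lt hl)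
    rw [horner_cons, ih (Nat.le_of_succ_le_succ hl), sum_range_succ', mul_sum, add_comm]
    simp only [List.getD_cons_succ, List.getD_cons_zero, pow_zero, mul_one, pow_succ']
    exact congrArg (· + e a) (sum_congr rfl fun i _ => mul_left_comm _ _ _)

/-- The dot product of the positive parts of the entries of `l` with `m`. -/
def posDot : List ℤ → List ℕ → ℕ
  | c :: l, k :: m => c.toNat * k + posDot l m
  | _, _ => 0

/-- The dot product of `l` and `m`. Separating the signs keeps its inner loop in `ℕ`, where the
kernel computes with big numbers natively. -/
def dot (l : List ℤ) (m : List ℕ) : ℤ := posDot l m - posDot (l.map fun c => -c) m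

theorem posDot_map_range (l : List ℤ) (n : ℕ) (f : ℕ → ℕ) :
    posDot l ((List.range n).map f) = ∑ i ∈ range n, (l.getD i 0).toNat * f i := by
  induction n generalizing l f with
  | zero => cases l <;> simp [posDot]
  | succ n ih =>
    rw [List.range_succ_eq_map, List.map_cons, List.map_map, sum_range_succ']
    cases l with
    | nil => simp [posDot]
    | cons c l => simp [posDot, ih, add_comm]

theorem dot_map_range (l : List ℤ) (n : ℕ) (f : ℕ → ℕ) :
    dot l ((List.range n).map f) = ∑ i ∈ range n, l.getD i 0 * (f i : ℤ) := by
  have getD_neg (i : ℕ) : (l.map fun c => -c).getD i 0 = -l.getD i 0 := by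
    simpa using List.getD_map l 0 (fun c : ℤ => -c) (n := i)
  rw [dot, posDot_map_range, posDot_map_range]
  push_cast
  simp only [getD_neg, ← sum_sub_distrib, ← sub_mul, Int.toNat_sub_toNat_neg]

end DotProducts

section PositivityOnBoxes

open Finset

/-- The values of `weight D a b n B` at the exponents `0, …, n`. -/
def weights (D a b n B : ℕ) : List ℕ := (List.range (n + 1)).map (weight D a b n B)

/-- The `j`-th coefficients of the polynomials `weightPoly D a b n i`, for `i = 0, …, n`, read off
their values at `2 ^ B`. -/
def weightCoeffs (D a b n B j : ℕ) : List ℕ :=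
  (weights D a b n (2 ^ B)).map fun w => (w >>> (B * j)) % 2 ^ B

theorem dot_weightCoeffs {D a b n B j K : ℕ} (hj : j ≤ n) (hab : a + b ≤ K) (hD : D + D ≤ K)
    (hK : K ^ n < 2 ^ B) (l : List ℤ) :
    dot l (weightCoeffs D a b n B j) =
      ∑ i ∈ range (n + 1), l.getD i 0 * ((weightPoly D a b n i).coeff j : ℤ) := by
  rw [weightCoeffs, weights, List.map_map, dot_map_range]
  refine sum_congr rfl fun i hi => ?_
  have hi : i ≤ n := mem_range_succ_iff.1 hi
  rw [Function.comp_apply, Nat.shiftRight_eq_div_pow, pow_mul, weight_div_pow_mod hi hj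
    fun k hk => (coeff_weightPoly_le hi hk hab hD).trans_lt hK]

namespace IsPacked

variable {ι A : Type*} [Fintype ι] [Zero A] {W : ι → ℤ} {w : ι → ℝ} {pack : A → ℤ} {val : A → ℝ}
  {norm : A → ℕ} {m : ℕ} {r : ℝ} {D a b n K : ℕ} {l : CoeffList A}

theorem getD_zero (hpack : pack 0 = 0) (hval : val 0 = 0)
    (h : ∀ p ∈ l, IsPacked W w (m * norm p) (pack p) (r * val p)) (i : ℕ) :
    IsPacked W w (m * norm (l.getD i 0)) ((l.map pack).getD i 0) (r * val (l.getD i 0)) := by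
  rw [← hpack, List.getD_map]
  refine forall_getD_zero (P := fun p => IsPacked W w (m * norm p) (pack p) (r * val p)) ?_ h i
  rw [hpack, hval, mul_zero]
  exact zero.mono (Nat.zero_le _)

theorem dot_weights (hpack : pack 0 = 0) (hval : val 0 = 0) (hnorm : norm 0 = 0)
    (hl : l.length ≤ n + 1) (h : ∀ p ∈ l, IsPacked W w (m * norm p) (pack p) (r * val p))
    (hab : a + b ≤ K) (hD : D + D ≤ K) {x s t : ℝ} (hst : s + t = 1) (hx : D * x = a * s + b * t)
    (B : ℕ) :
    IsPacked (fun p : ι × Fin (n + 1) => W p.1 * (B : ℤ) ^ (p.2 : ℕ))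
      (fun p => w p.1 * (s ^ (n - p.2 : ℕ) * t ^ (p.2 : ℕ))) (m * K ^ n * horner norm 1 l)
      (dot (l.map pack) (weights D a b n B)) (r * D ^ n * horner val x l) := by
  rw [weights, dot_map_range, horner_eq_sum hval x hl, horner_eq_sum hnorm 1 hl, mul_sum, mul_sum]
  convert IsPacked.sum fun i hi =>
    (getD_zero hpack hval h i).mul (isPacked_weight (mem_range_succ_iff.1 hi) hab hD hst hx B)
    using 2 <;> ring

theorem dot_weightCoeffs (hpack : pack 0 = 0) (hval : val 0 = 0) (hnorm : norm 0 = 0)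
    (hl : l.length ≤ n + 1) (h : ∀ p ∈ l, IsPacked W w (m * norm p) (pack p) (r * val p))
    (hab : a + b ≤ K) (hD : D + D ≤ K) {B j : ℕ} (hK : K ^ n < 2 ^ B) (hj : j ≤ n) :
    IsPacked W w (m * K ^ n * horner norm 1 l)
      (dot (l.map pack) (weightCoeffs D a b n B j))
      (∑ i ∈ range (n + 1), r * val (l.getD i 0) * (weightPoly D a b n i).coeff j) := by
  rw [KissingNumber.dot_weightCoeffs hj hab hD hK, horner_eq_sum hnorm 1 hl, mul_sum]
  simp only [mul_comm _ ((weightPoly D a b n _).coeff j : ℤ),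
    mul_comm _ ((weightPoly D a b n _).coeff j : ℝ)]
  refine IsPacked.sum fun i hi => ((getD_zero hpack hval h i).natCast_mul _).mono ?_
  rw [one_pow, mul_one, mul_right_comm, mul_comm]
  exact Nat.mul_le_mul_left _ (coeff_weightPoly_le (mem_range_succ_iff.1 hi) hj hab hD)

end IsPacked

/-- The test that every Bernstein coefficient in the last variable of a polynomial with
coefficients packed into `c` has nonnegative coefficients, after adding `g` times the polynomial
packed into `d`. -/
def leafCheck (D n B : ℕ) (c d : List ℤ) (a b g : ℕ) : Bool :=
  (List.range (n + 1)).all fun j =>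
    signTest B ((n + 1) * (n + 1))
      (dot c (weightCoeffs D a b n B j) + g * dot d (weightCoeffs D a b n B j))

theorem nonneg_of_leafCheck {ι A : Type*} [Fintype ι] [Zero A] {pos : ι → ℕ} {w : ι → ℝ}
    {pack : A → ℤ} {val : A → ℝ} {norm : A → ℕ} {m : ℕ} {r : ℝ} {D n B a b g K : ℕ}
    {p q : CoeffList A} (hpack : pack 0 = 0) (hval : val 0 = 0) (hnorm : norm 0 = 0)
    (hinj : pos.Injective) (hpos : ∀ i, pos i < (n + 1) * (n + 1)) (hw : ∀ i, 0 ≤ w i) (hr : 0 < r)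
    (hp_len : p.length ≤ n + 1) (hq_len : q.length ≤ n + 1)
    (hp : ∀ c ∈ p, IsPacked (fun i => (2 ^ B) ^ pos i) w (m * norm c) (pack c) (r * val c))
    (hq : ∀ c ∈ q, IsPacked (fun i => (2 ^ B) ^ pos i) w (m * norm c) (pack c) (r * val c))
    (hab : a + b ≤ K) (hD : D + D ≤ K) (hD0 : 0 < D) (hB : 0 < B) (hK : K ^ n < 2 ^ B)
    (hM : m * K ^ n * (horner norm 1 p + g * horner norm 1 q) < 2 ^ (B - 1))
    {z s t : ℝ} (hs : 0 ≤ s) (ht : 0 ≤ t) (hst : s + t = 1) (hz : D * z = a * s + b * t)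
    (h : leafCheck D n B (p.map pack) (q.map pack) a b g = true) :
    0 ≤ horner val z p + g * horner val z q := by
  refine (mul_nonneg_iff_of_pos_left hr).1 ?_
  rw [horner_eq_sum hval z hp_len, horner_eq_sum hval z hq_len, mul_sum, ← sum_add_distrib, mul_sum]
  simp only [← mul_assoc, ← add_mul]
  refine sum_mul_pow_nonneg_of_bernstein hs ht hst hz hD0 fun j hj => ?_
  rw [leafCheck, List.all_eq_true] at h
  have packed := (IsPacked.dot_weightCoeffs hpack hval hnorm hp_len hp hab hD hK hj).add
    ((IsPacked.dot_weightCoeffs hpack hval hnorm hq_len hq hab hD hK hj).natCast_mul g)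
  refine (packed.nonneg_of_signTest hinj hpos hw (hM.trans_le' ?_) hB
    (h j (List.mem_range.2 (Nat.lt_succ_of_le hj)))).trans_eq ?_
  · exact le_of_eq (by ring)
  · rw [mul_sum, ← sum_add_distrib]
    exact sum_congr rfl fun i _ => by ring

/-- The test that the cells of a list are consecutive intervals from `a` to `e`, each given by its
right endpoint and some data, and that all of them pass the test `P`. -/
def coverCheck {A : Type*} (P : ℕ → ℕ → A → Bool) (e : ℕ) : ℕ → List (ℕ × A) → Bool
  | a, [] => e == a
  | a, (b, d) :: cells => decide (a < b ∧ b ≤ e) && P a b d && coverCheck P e b cells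

theorem exists_cell_of_coverCheck {A : Type*} {P : ℕ → ℕ → A → Bool} {e a : ℕ}
    {cells : List (ℕ × A)} (h : coverCheck P e a cells = true) {x : ℝ} (hae : a < e) (hax : a ≤ x)
    (hxe : x ≤ e) : ∃ a' b' d, a' < b' ∧ b' ≤ e ∧ P a' b' d = true ∧ a' ≤ x ∧ x ≤ b' := by
  induction cells generalizing a with
  | nil => exact absurd (beq_iff_eq.1 h) hae.ne'
  | cons cell cells ih =>
    obtain ⟨b, d⟩ := cell
    simp only [coverCheck, Bool.and_eq_true, decide_eq_true_eq] at h
    obtain ⟨⟨⟨hab, hbe⟩, hP⟩, hcells⟩ := h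
    rcases le_or_gt x b with hxb | hbx
    · exact ⟨a, b, d, hab, hbe, hP, hax, hxb⟩
    · have hbe' : b < e := by exact_mod_cast hbx.trans_le hxe
      exact ih hcells hbe' hbx.le

theorem exists_barycentric_coordinates {a b y : ℝ} (hab : a < b) (hay : a ≤ y) (hyb : y ≤ b) :
    ∃ s t : ℝ, 0 ≤ s ∧ 0 ≤ t ∧ s + t = 1 ∧ y = a * s + b * t := by
  obtain ⟨s, t, hs, ht, hst, hy⟩ := (segment_eq_Icc hab.le).symm.subset (Set.mem_Icc.2 ⟨hay, hyb⟩)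
  exact ⟨s, t, hs, ht, hst, by simp only [← hy, smul_eq_mul, mul_comm]⟩

/-- The test that all Bernstein coefficients of `p` on the interval `[a / D, b / D]` are
nonnegative. -/
def intervalCheck (D n B : ℕ) (p : CoeffList ℤ) (a b : ℕ) : Bool :=
  (List.range (n + 1)).all fun j => decide (0 ≤ dot p (weightCoeffs D a b n B j))

theorem horner_nonneg_of_intervalCheck {D n B K a b : ℕ} {p : CoeffList ℤ} (hp : p.length ≤ n + 1)
    (hD0 : 0 < D) (hab : a + b ≤ K) (hD : D + D ≤ K) (hK : K ^ n < 2 ^ B)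
    (h : intervalCheck D n B p a b = true) {x s t : ℝ} (hs : 0 ≤ s) (ht : 0 ≤ t) (hst : s + t = 1)
    (hx : D * x = a * s + b * t) : 0 ≤ horner Int.cast x p := by
  simp only [intervalCheck, List.all_eq_true, decide_eq_true_eq] at h
  rw [horner_eq_sum Int.cast_zero x hp]
  refine sum_mul_pow_nonneg_of_bernstein hs ht hst hx hD0 fun j hj => ?_
  have := h j (List.mem_range.2 (Nat.lt_succ_of_le hj))
  rw [dot_weightCoeffs hj hab hD hK] at this
  exact_mod_cast this

theorem horner_nonneg_of_coverCheck {D n B e : ℕ} {p : CoeffList ℤ} (hp : p.length ≤ n + 1)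
    (hD0 : 0 < D) (hDe : D ≤ e) (hK : (e + e) ^ n < 2 ^ B) {cells : List (ℕ × Unit)}
    (h : coverCheck (fun a b _ => intervalCheck D n B p a b) e 0 cells = true) {x : ℝ}
    (hx : 0 ≤ x) (hxe : D * x ≤ e) : 0 ≤ horner Int.cast x p := by
  obtain ⟨a, b, -, hab, hbe, hcell, hax, hxb⟩ := exists_cell_of_coverCheck h
    (hD0.trans_le hDe) (by rw [Nat.cast_zero]; positivity) hxe
  obtain ⟨s, t, hs, ht, hst, hx⟩ := exists_barycentric_coordinates (Nat.cast_lt.2 hab) hax hxb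
  exact horner_nonneg_of_intervalCheck hp hD0 (by lia) (by lia) hK hcell hs ht hst hx

theorem isPacked_dot_dot_weights {D a b a' b' n K : ℕ} (hab : a + b ≤ K) (hab' : a' + b' ≤ K)
    (hD : D + D ≤ K) {x s t y s' t' : ℝ} (hst : s + t = 1) (hx : D * x = a * s + b * t)
    (hst' : s' + t' = 1) (hy : D * y = a' * s' + b' * t') (B : ℕ) {q : CoeffList (CoeffList ℤ)}
    (hq : q.length ≤ n + 1) (hr : ∀ r ∈ q, r.length ≤ n + 1) :
    IsPacked (fun i : (Unit × Fin (n + 1)) × Fin (n + 1) =>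
        (2 ^ B) ^ (finProdFinEquiv (i.2, i.1.2) : ℕ))
      (fun i => 1 * (s ^ (n - i.1.2 : ℕ) * t ^ (i.1.2 : ℕ)) *
        (s' ^ (n - i.2 : ℕ) * t' ^ (i.2 : ℕ)))
      (1 * K ^ n * K ^ n * horner (horner Int.natAbs 1) 1 q)
      (dot (q.map (dot · (weights D a b n (2 ^ B)))) (weights D a' b' n ((2 ^ B) ^ (n + 1))))
      (1 * D ^ n * D ^ n * horner (horner Int.cast x) y q) := by
  have inner (r : CoeffList ℤ) (hr : r.length ≤ n + 1) :=
    IsPacked.dot_weights (pack := id) (m := 1) (r := 1) rfl Int.cast_zero rfl hr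
      (fun c _ => by simpa using IsPacked.intCast c) hab hD hst hx (2 ^ B)
  simp only [List.map_id] at inner
  convert IsPacked.dot_weights rfl rfl rfl hq (fun r h => inner r (hr r h)) hab' hD hst' hy
    ((2 ^ B) ^ (n + 1)) using 2 with i
  rw [finProdFinEquiv_apply_val]
  push_cast
  rw [one_mul, pow_add, pow_mul _ (n + 1)]

/-- The parameters of a positivity test for `p + g * q` on the part of the cube
`0 ≤ D * x, D * y, D * z ≤ e`, with multipliers `g ≤ G`: polynomials have degree at most `n` in
each of the variables, and `B` bits are enough for each of their Bernstein coefficients. -/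
structure IsPackable (D e n B G : ℕ) (p q : TriPoly) : Prop where
  denom_pos : 0 < D
  denom_le : D ≤ e
  bits_pos : 0 < B
  weight_lt : (e + e) ^ n < 2 ^ B
  degree_left : p.DegreeLE n
  degree_right : q.DegreeLE n
  norm_lt : 1 * (e + e) ^ n * (e + e) ^ n * (e + e) ^ n * (p.norm + G * q.norm) < 2 ^ (B - 1)

/-- The positivity test on the boxes with sides `[a', b']` in the direction of the second variable
and the consecutive cells from `a'` to `e` in the direction of the third variable. Each cell comes
with its multiplier. The lists `p` and `q` contain polynomials packed with respect to the first
variable. -/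
def columnCheck (D e n B G : ℕ) (p q : List (List ℤ)) (a b : ℕ) (cells : List (ℕ × ℕ)) : Bool :=
  let pack (r : List ℤ) : ℤ := dot r (weights D a b n ((2 ^ B) ^ (n + 1)))
  let c := p.map pack
  let d := q.map pack
  coverCheck (fun a b g => decide (g ≤ G) && leafCheck D n B c d a b g) e a cells

/-- The positivity test for the points with `a ≤ D * x ≤ b` and `x ≤ y ≤ z`. -/
def slabCheck (D e n B G : ℕ) (p q : TriPoly) (a b : ℕ) (cells : List (ℕ × List (ℕ × ℕ))) : Bool :=
  let pack (r : List ℤ) : ℤ := dot r (weights D a b n (2 ^ B))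
  let c := p.map (List.map pack)
  let d := q.map (List.map pack)
  coverCheck (columnCheck D e n B G c d) e a cells

/-- At all points with `x ≤ y ≤ z` and `a ≤ D * x ≤ b`, some multiple of `q` makes `p`
nonnegative. -/
def NonnegOnSlab (D e : ℕ) (p q : TriPoly) (a b : ℕ) : Prop :=
  ∀ ⦃x y z : ℝ⦄, a ≤ D * x → D * x ≤ b → x ≤ y → y ≤ z → D * z ≤ e →
    ∃ g : ℕ, 0 ≤ p.eval x y z + g * q.eval x y z

theorem NonnegOnSlab.trans {D e a b c : ℕ} {p q : TriPoly} (hab : NonnegOnSlab D e p q a b)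
    (hbc : NonnegOnSlab D e p q b c) : NonnegOnSlab D e p q a c := by
  intro x y z hax hxc
  rcases le_total (D * x) (b : ℝ) with hxb | hbx
  · exact hab hax hxb
  · exact hbc hbx hxc

theorem IsPackable.nonnegOnSlab {D e n B G a b : ℕ} {p q : TriPoly}
    (hpq : IsPackable D e n B G p q) (hab : a < b) (hbe : b ≤ e)
    {cells : List (ℕ × List (ℕ × ℕ))} (h : slabCheck D e n B G p q a b cells = true) :
    NonnegOnSlab D e p q a b := by
  intro x y z hax hxb hxy hyz hze
  have hD : 0 < (D : ℝ) := mod_cast hpq.denom_pos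
  have hDD : D + D ≤ e + e := add_le_add hpq.denom_le hpq.denom_le
  obtain ⟨a', b', zcells, hab', hbe', hcol, hay, hyb⟩ := exists_cell_of_coverCheck h
    (hab.trans_le hbe) (hax.trans (by gcongr : D * x ≤ D * y))
    ((by gcongr : D * y ≤ D * z).trans hze)
  obtain ⟨a'', b'', g, hab'', hbe'', hleaf, haz, hzb⟩ := exists_cell_of_coverCheck hcol
    (hab'.trans_le hbe') (hay.trans (by gcongr : D * y ≤ D * z)) hze
  rw [Bool.and_eq_true, decide_eq_true_eq] at hleaf
  obtain ⟨s, t, hs, ht, hst, hx⟩ :=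
    exists_barycentric_coordinates (Nat.cast_lt.2 hab) hax hxb
  obtain ⟨s', t', hs', ht', hst', hy⟩ :=
    exists_barycentric_coordinates (Nat.cast_lt.2 hab') hay hyb
  obtain ⟨s'', t'', hs'', ht'', hst'', hz⟩ :=
    exists_barycentric_coordinates (Nat.cast_lt.2 hab'') haz hzb
  have packed {p : TriPoly} (hp : p.DegreeLE n) (c : CoeffList (CoeffList ℤ)) (hc : c ∈ p) :=
    isPacked_dot_dot_weights (by lia) (by lia) hDD hst hx hst' hy B (hp.2 c hc).1 (hp.2 c hc).2
  refine ⟨g, nonneg_of_leafCheck rfl rfl rfl ?_ ?_ ?_ (by positivity) hpq.degree_left.1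
    hpq.degree_right.1 (packed hpq.degree_left) (packed hpq.degree_right) (by lia) hDD
    hpq.denom_pos hpq.bits_pos hpq.weight_lt (hpq.norm_lt.trans_le' ?_) hs'' ht'' hst'' hz ?_⟩
  · rintro ⟨⟨_, i⟩, j⟩ ⟨⟨_, i'⟩, j'⟩ heq
    simpa [and_comm] using finProdFinEquiv.injective (Fin.ext heq)
  · exact fun i => Fin.is_lt _
  · exact fun i => by positivity
  · exact Nat.mul_le_mul_left _ (Nat.add_le_add_left (Nat.mul_le_mul_right _ hleaf.1) _)
  · simpa only [List.map_map, Function.comp_def] using hleaf.2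

end PositivityOnBoxes

section PolynomialCertificates

open scoped InnerProductSpace
open Module

theorem forall_of_forall_sorted {α : Type*} [LinearOrder α] {P : α → α → α → Prop}
    (hsorted : ∀ x y z, x ≤ y → y ≤ z → P x y z) (hswap₁ : ∀ x y z, P x y z → P y x z)
    (hswap₂ : ∀ x y z, P x y z → P x z y) (x y z : α) : P x y z := by
  have of_le (x y z) (hxy : x ≤ y) : P x y z := by
    rcases le_total y z with hyz | hzy
    · exact hsorted x y z hxy hyz
    · refine hswap₂ _ _ _ ?_
      rcases le_total x z with hxz | hzx
      · exact hsorted x z y hxz hzy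
      · exact hswap₁ _ _ _ (hsorted z x y hzx hxy)
  rcases le_total x y with hxy | hyx
  · exact of_le x y z hxy
  · exact hswap₁ _ _ _ (of_le y x z hyx)

theorem threePoint_comm (c : ℝ) (k₀ : ℕ) (blocks : List (List (ℝ → ℝ))) (u v t : ℝ) :
    threePoint c k₀ blocks u v t = threePoint c k₀ blocks v u t := by
  simp only [threePoint, squaresKernel, mul_comm]

theorem gramDet_comm (u v t : ℝ) : gramDet u v t = gramDet v u t := by
  rw [gramDet, gramDet]
  ring

theorem gramDet_right_comm (u v t : ℝ) : gramDet u v t = gramDet u t v := by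
  rw [gramDet, gramDet]
  ring

/-- The polynomial `-M * gramDet u v t` in the shifted variables `1 + u`, `1 + v`, `1 + t`. -/
def multiplierPoly (M : ℕ) : TriPoly :=
  ((M : ℤ) : TriPoly) * [[[4, -4, 1], [-4, 2], [1]], [[-4, 2], [2, -2]], [[1]]]

theorem eval_multiplierPoly (M : ℕ) (u v t : ℝ) :
    (multiplierPoly M).eval (1 + u) (1 + v) (1 + t) = -(M * gramDet u v t) := by
  rw [multiplierPoly, (TriPoly.isArithHom_eval _ _ _).map_mul,
    (TriPoly.isArithHom_eval _ _ _).map_intCast, Int.cast_natCast, ← mul_neg]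
  congr 1
  simp only [TriPoly.eval, horner, gramDet, List.foldr]
  push_cast
  ring

/-- The polynomial `-m - 2 ∑ (a, p), a p(u) - T(u, u, 1)` in the shifted variable `1 + u`, where
`T` is the three-point function of `base.map Prod.snd :: blocks`. -/
def pairPoly (c m : ℤ) (base : List (ℤ × CoeffList ℤ)) (blocks : List (List (CoeffList ℤ))) :
    CoeffList ℤ :=
  ((-1 : ℤ) : CoeffList ℤ) * ((m : CoeffList ℤ) + (((2 : ℤ) : CoeffList ℤ) *
    expandLinear base [0, 1] + expandThreePoint c (base.map Prod.snd :: blocks) [0, 1] [0, 1] [2]))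

theorem horner_pairPoly (c m : ℤ) (base : List (ℤ × CoeffList ℤ))
    (blocks : List (List (CoeffList ℤ))) (u : ℝ) :
    horner Int.cast (1 + u) (pairPoly c m base blocks) =
      -(m + (2 * (base.map fun (a, p) => (a : ℝ) * shiftedEval p u).sum +
        threePoint c 0 ((base.map Prod.snd :: blocks).map (List.map shiftedEval)) u u 1)) := by
  have hom : IsArithHom (horner Int.cast (1 + u)) := isArithHom_intCast.horner (R := ℝ) (1 + u)
  have hx : horner Int.cast (1 + u) ([0, 1] : CoeffList ℤ) = 1 + u := by simp [horner]
  have hz : horner Int.cast (1 + u) ([2] : CoeffList ℤ) = 1 + 1 := by norm_num [horner]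
  simp only [pairPoly, hom.map_mul, hom.map_add, hom.map_intCast, hom.map_expandLinear hx,
    hom.map_expandThreePoint hx hx hz]
  push_cast
  ring

theorem threePoint_sum_nonpos_of_nonnegOnSlab {c : ℤ} {blocks : List (List (CoeffList ℤ))}
    {p : TriPoly} {M D e : ℕ} {α : ℝ}
    (hp : (TriPoly.symmetricSum (expandThreePoint c blocks TriPoly.X TriPoly.Y TriPoly.Z) +
      p).isZero = true) (hα : D * (1 + α) ≤ e) (h : NonnegOnSlab D e p (multiplierPoly M) 0 e) :
    ∀ u ∈ Set.Icc (-1) α, ∀ v ∈ Set.Icc (-1) α, ∀ t ∈ Set.Icc (-1) α, 0 ≤ gramDet u v t →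
      threePoint c 0 (blocks.map (List.map shiftedEval)) u v t +
        threePoint c 0 (blocks.map (List.map shiftedEval)) u t v +
        threePoint c 0 (blocks.map (List.map shiftedEval)) v t u ≤ 0 := by
  set T := threePoint c 0 (blocks.map (List.map shiftedEval)) with hT
  have T_comm (u v t : ℝ) : T u v t = T v u t := threePoint_comm _ _ _ _ _ _
  have eval_p (u v t : ℝ) :
      T u v t + T u t v + T v t u + p.eval (1 + u) (1 + v) (1 + t) = 0 := by
    rw [← TriPoly.eval_eq_zero_of_isZero hp (1 + u) (1 + v) (1 + t),
      (TriPoly.isArithHom_eval _ _ _).map_add, TriPoly.eval_symmetricSum]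
    simp only [TriPoly.eval_expandThreePoint, hT]
  suffices main : ∀ u v t : ℝ, u ∈ Set.Icc (-1) α → v ∈ Set.Icc (-1) α → t ∈ Set.Icc (-1) α →
      0 ≤ gramDet u v t → T u v t + T u t v + T v t u ≤ 0 from
    fun u hu v hv t ht => main u v t hu hv ht
  refine forall_of_forall_sorted ?_ ?_ ?_
  · intro u v t huv hvt hu _ ht hdet
    have le_of_le {x : ℝ} (hx : x ≤ α) : D * (1 + x) ≤ (e : ℝ) := hα.trans' (by gcongr)
    obtain ⟨g, hg⟩ := h (x := 1 + u) (y := 1 + v) (z := 1 + t)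
      (by rw [Nat.cast_zero]; exact mul_nonneg D.cast_nonneg (by linarith [hu.1]))
      (le_of_le hu.2) (by gcongr) (by gcongr) (le_of_le ht.2)
    rw [eval_multiplierPoly] at hg
    have : 0 ≤ (g : ℝ) * (M * gramDet u v t) := by positivity
    linarith [eval_p u v t]
  · intro u v t main hv hu ht hdet
    linarith [main hu hv ht (by rwa [gramDet_comm]), T_comm u v t]
  · intro u v t main hu ht hv hdet
    linarith [main hu hv ht (by rwa [gramDet_right_comm]), T_comm v t u]

theorem card_le_of_polynomial_certificate {E : Type*} [NormedAddCommGroup E]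
    [InnerProductSpace ℝ E] {c : ℤ} (hc : c + 3 = finrank ℝ E) (hpos : 0 < c)
    {S : Finset E} (hnorm : ∀ x ∈ S, ‖x‖ = 1) {α : ℝ}
    (hinner : ∀ x ∈ S, ∀ y ∈ S, x ≠ y → ⟪x, y⟫_ℝ ≤ α) {m : ℤ} {N : ℕ} (hm : 0 ≤ m)
    (base : List (ℤ × CoeffList ℤ)) (blocks : List (List (CoeffList ℤ)))
    (hA : (base.map fun (a, _) => a ^ 2).sum < N * m)
    (hL : ∀ u ∈ Set.Icc (-1) α, 0 ≤ horner Int.cast (1 + u) (pairPoly c m base blocks))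
    {p : TriPoly} {M D e : ℕ}
    (hp : (TriPoly.symmetricSum (expandThreePoint c (base.map Prod.snd :: blocks)
      TriPoly.X TriPoly.Y TriPoly.Z) + p).isZero = true)
    (hα : D * (1 + α) ≤ e) (hT : NonnegOnSlab D e p (multiplierPoly M) 0 e) :
    S.card ≤ N := by
  have hbase : (base.map fun (a, p) => ((a : ℝ), shiftedEval p)).map Prod.snd =
      (base.map Prod.snd).map shiftedEval := by simp
  refine card_le_of_threePoint_certificate (c := c) (α := α) (m := m) (mod_cast hc)
    (mod_cast hpos) hnorm hinner (base.map fun (a, p) => ((a : ℝ), shiftedEval p))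
    (blocks.map (List.map shiftedEval)) (mod_cast hm) ?_ ?_ ?_
  · have := Int.cast_lt (R := ℝ).2 hA
    simpa [Int.cast_list_sum, Function.comp_def] using this
  · intro u hu
    have := hL u hu
    rw [horner_pairPoly] at this
    rw [hbase, List.map_map]
    simp only [Function.comp_def, List.map_cons] at this ⊢
    linarith
  · simpa only [hbase, List.map_cons] using threePoint_sum_nonpos_of_nonnegOnSlab hp hα hT

end PolynomialCertificates

section Certificate

/-- The constants and polynomials, in the variable `1 + u`, of the block of degree `0`. -/
def certificateBase : List (ℤ × CoeffList ℤ) :=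
  [(-628993838688374796021, [11672363901905582]), (90549277537217453994, [-237276891384112038,
  235578839793180222]), (601293395721711835364, [2024145296299611625, -4265116037133685702,
  2128113623560834117]), (-54897053414918255077, [-10400679855199196432, 33958028406089490642,
  -35259086832020039035, 11709184777569346114]), (32760136419563099235, [31399601503596240776,
  -139791886157737581511, 222270013694376229684, -150493125540394776067, 36790025455228680564]),
  (-127795546530436462506, [-92661222339759999971, 511178074572170765758,
  -1083183245967543547610, 1106048677530015280892, -545946739625977899149,
  104506221712318979963]), (324313156301506159350, [74954612946781691123, -558213336379466870443,
  1644372040260248378182, -2471609923976178606959, 2011034533198993435964,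
  -843585110198671237050, 143009068925817090420]), (571266064817762820936,
  [-234988446919535607968, 2021103941055966590309, -7163041417963406986865,
  13600891198069498144884, -14987593528546190209563, 9613764933335338066471,
  -3333240806834895351525, 483135808022019021050]), (-52900596809500466866,
  [496890843180407710285, -4656617783860796558843, 18537653719892927411778,
  -40933980899616694938051, 54830870300519285054384, -45631052163569100066311,
  23051633972356079373084, -6467584582425076583243, 772282898530301842018]),
  (3506575006316032797337, [-122735752334362865202, 1602454734617589154882,
  -8741475452202042427912, 26474577273055997583418, -49511054196487529360664,
  59682876855203711731858, -46593703396264547466511, 22795293730931281403585,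
  -6358165295960567502411, 771879577598609677531]), (874151971858800604467,
  [130260492780997924514, -1304191652473524962744, 6455380415746061613890,
  -20631901411696510139315, 45393492291305467779276, -69181533538158999022559,
  72264699218610558336679, -50555302729823523760668, 22601067540086056754293,
  -5833253764170796224503, 661239971381506173320]), (588004669631772276180,
  [-1699175525254067481424, 20956000198287913244365, -117725894705495798217671,
  398629163701837068126381, -904198826718152262354841, 1440155963726336879454758,
  -1638597759989782402248911, 1327103350701698568179133, -747183268838454982129139,
  277692607010049149162157, -61173870205679210097940, 6041690952532696552679]),
  (-830413969633846157487, [1369285077096845457615, -17145850675133938778225,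
  105391397661708029232107, -413837672415472797390626, 1129499279757905184647572,
  -2212862252349827749891818, 3149794865510115825522621, -3258743731226619371625784,
  2423865933681669598679621, -1262433883327522756863282, 436944607773193743061710,
  -90262883457416081451602, 8420821423472239878660]), (1734020031407167302718,
  [-17936841750457050801, 4522086378344477661924, -67162565807647493722738,
  454587151020698862610164, -1834351527828721338044941, 4914160215179842996730012,
  -9213090502035636929595542, 12400428849792080949057543, -12077415325901787747172184,
  8450514165879820596680750, -4144165229662751080144444, 1352654540711126108509769,
  -263966501917502816318984, 23302591723722182498876]), (-304216944810865574415,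
  [609196197008209468138, -15163746737845395001996, 176053386317005030261809,
  -1197654826496924987375447, 5281105200763552986442861, -16035207280089244280804494,
  34817543160734317465769810, -55282967250747410061545496, 64851727511904546758343527,
  -56174241723171453404690549, 35486879985077974378194920, -15897106560924014664805231,
  4784200149617132885955452, -867354860291567890308859, 71577738557169315867756]),
  (-50031190151194458262, [68441274068540182044, 8951230736020718311988,
  -180346609183527629033826, 1555826473840467538729333, -7982303044389619506107836,
  27513991365926289762474199, -67697094382825234387918286, 122879631350003686398243571,
  -167361740268708558716799668, 172012700250284094170264525, -132841022301115385067613029,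
  75917203456983501130497997, -31146153919000146421860099, 8675021619574358057761390,
  -1468840662669185615309194, 114106993254772042283845]), (-378611891279899413847,
  [153237309100082990235, -7171787848142169597245, 129499752915036663446403,
  -1250114316558525621642327, 7573978493586147993319621, -31380482439345860149530541,
  93461114237054280233467173, -206238356919696919587402295, 343253468349136540911481661,
  -434664710020463502993751698, 419144664601561361641469849, -305573041051101653187263959,
  165569371085194501428128299, -64604970071742845638329523, 17154673630778622101294959,
  -2774231226447146568892516, 206154420471677034445047])]

/-- The polynomials, in the variable `1 + u`, of the blocks of positive degree. -/
def certificateBlocks : List (List (CoeffList ℤ)) :=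
  [[[26283179465875265], [-188271681120615933, 175300957644661962], [2459412834823022194,
  -5040511358345166046, 2485016170329388600], [-6906826377054223161, 22306899613016585440,
  -22976064530786748787, 7587343483811468116], [23462536901786666439, -103042011161025132369,
  162857056682085787939, -110346486433404332858, 27154974622787461127], [-58232165153651554944,
  330480599035577480135, -725794262266566817689, 773207724630818128072, -400312644331692599797,
  80692183161117317868], [119593527494983413649, -838400857491780786405, 2370590380775631919841,
  -3475747411222066283668, 2794796222529348656274, -1170506361170392110631,
  199687153507389915150], [-196648689040583251773, 1799309280618724090223,
  -6654200807532852991189, 13040280051652225396633, -14735174965987186881198,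
  9653739486548222392273, -3410060518117626666622, 502759012629633644692],
  [123654787390533000348, -1213307621337629821177, 5056281434442528869970,
  -11735622097554454266207, 16630394534257403077369, -14751256492595104422698,
  8002277180306065321822, -2427993257099497481883, 315532977220583230087],
  [-836871881805093076988, 7993510354706757468113, -33610048730018229922194,
  81631547487055757099490, -126150823064077956690225, 128581502040992760370086,
  -86423790570640385462641, 36936695471754421399638, -9109700791300637117668,
  987932521230923441340], [530627399104275690696, -5447762384654764092651,
  26188801499481017049627, -77783737380389752767531, 156936075231492665486692,
  -221908878437371507418119, 219773868413899812524460, -148932637708519082506783,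
  65611972188300287093412, -16894859006331303010869, 1926500533499880918004],
  [-177198802551251855962, 2649175695533821347316, -18847840815330165424825,
  80349160956629206791052, -222829814376182190299647, 418797050053605774368412,
  -543920051674279280362196, 489200863051201384941685, -299491943252881450314417,
  119222766654892388948575, -27851586448844252286086, 2899411131032472265397],
  [80185585465162464826, -4217083895677144609981, 47214761783734878965227,
  -259218350394571656083766, 863954751189326544741916, -1916679909631796356007030,
  2959448458676210697974890, -3239839189257249324251737, 2512731832823026100648120,
  -1352445518780770708066160, 480996003855289473085047, -101713076004536470519422,
  9687156164648067355695], [-442429469324011444680, 9274536127314069226832,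
  -88227851348390087418357, 495060546444443901778767, -1820735317471197592537316,
  4642598522302879780135990, -8472217068176933943162629, 11242386831262391347611856,
  -10881133161049671371596859, 7606005814238855210383078, -3740109972465259301311542,
  1227298142361801356939872, -241237056422805766255539, 21478464917722316486105],
  [294413110776396568841, -10389688556632822280158, 133221067454314455121092,
  -931312898312678992235336, 4142152781209907163487980, -12651614957307115274863714,
  27669709063362957056455160, -44321659275469450070358869, 52498993614980717279099068,
  -45923737842440300815619117, 29286401600467089370810554, -13234147872533973810087999,
  4013982615855655143527891, -732718222357800509572999, 60825600418520655533049],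
  [-162907205098904211181, 8292345909827457035560, -139121195156528665283604,
  1214495950398633824154591, -6558317447816896134832648, 23919056176402556857103172,
  -61967773958980444081088837, 117502442317111746681804670, -165785382964125319475568232,
  175113199782610336270719751, -137986448100922183689778540, 79952181228928490189757655,
  -33072688647480030370908712, 9243134584375260402838291, -1563873689225266940356571,
  120966518561271122326782]], [[13845008586929251], [-200356680694217143, 205970377978500184],
  [1134244776724180559, -2289720455494716618, 1118395002642007403], [-3697435152435685635,
  11412755840075828193, -11340622455382350587, 3640520744409775454], [6710012214118282624,
  -29054519195303339589, 45176611822264274638, -30030354519741630856, 7232583098737640196],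
  [-24985437122349320484, 143088203765293689747, -314558320225302163924, 332833761802183554061,
  -170022410760557740477, 33638130561649645482], [50319646551409923791, -356525732932299925683,
  1001811634342675115188, -1438130780005305199087, 1118262819581768503763,
  -448512259415557996718, 72750905238811814089], [-108459689263046765244, 826381579365761951533,
  -2659451692030811625874, 4695475565215918771732, -4916329103149326886591,
  3053255949985380887568, -1041230739561830222795, 150365061653699933232],
  [-10380766915415868433, 39654516266079755919, 23109561119080142722, -408649412564963301540,
  1037113657459631890253, -1321058018299368026730, 940355762607516493816, -355964813363715421808,
  55802705802605739585], [137917143857988544746, -949826059820841172005, 2179733099644518539733,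
  -370210396853295157820, -7661818168739902914220, 16710441321489508800550,
  -17504736865590681862998, 10276218278270828626447, -3250937976790339351793,
  433194376954004212197], [38261042662584056932, -1359618565601550088072,
  11294821568381930058302, -45812614436219406378906, 110218925395809127716790,
  -170139610704501472296867, 173555480019654078096126, -116641212702512985188931,
  49736898289416338222288, -12204283329813779138835, 1312925832924231950506],
  [16925323415455297326, 1015209196347116785519, -11576002963672620861374,
  56083416966235405675349, -159262806060777226263266, 295624799273326927965429,
  -375041439626959973713298, 328994463909116293354074, -196766972401264335098676,
  76679845527239331548539, -17560207761052845356356, 1792774392808054468261],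
  [345384895548794539885, -6698335534943077237685, 55506119475456170321730,
  -264896652076484733359314, 819327482764608741584915, -1741517392513604841597099,
  2620096070046044629807747, -2820589825059766057209240, 2161866017879718331856403,
  -1152889550228809020224602, 406742643116192684643484, -85360500843369820755835,
  8068524333216312606191], [-363658457402021174889, 7595142981169982801775,
  -68439307942337934390552, 359946443315132279289389, -1247314892812868831482752,
  3026741922152034723193913, -5309737800488399262301564, 6830842116212554748800791,
  -6451272437039506387695896, 4420892053089545800152229, -2137981600926810396024514,
  691398599029298240341103, -134093987425366469637146, 11787417121288402306155],
  [73098974502509748973, -4027201543174636731728, 60816848975492736094871,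
  -468959747317567516214032, 2229138593008197451615099, -7132718428616575500572959,
  16118815579324632900184198, -26421517088711700771258064, 31809137377926844840000752,
  -28147748388701693702715129, 18099749935066133020145436, -8229304567326852140581087,
  2507830302906407869505359, -459568708334781995642694, 38282400270405036183291]],
  [[9305852903256251], [-92500920513366463, 95677881313550350], [287746648543541623,
  -649057871823111690, 349101209654278828], [-980127482559866304, 3118818868362109832,
  -3224682935769725998, 1083085520743015621], [3619425719658674886, -15822369089215350781,
  24987710183173516934, -16961214145370106535, 4187788556302162468], [-9702895070329527032,
  54139409655273286406, -116890212107136968387, 122218575973911014660, -61975663644493342607,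
  12213252699470308765], [27537260064254593739, -183910355590065242007, 499466997940228122839,
  -708528551484309970647, 554949232828379927482, -227850695320192032900, 38341402222330430195],
  [-29062553243997861731, 209431200368124788558, -638896652232228393228, 1068406102889064653451,
  -1056416506450239012968, 616898618937616026385, -196769880629985508242, 26413271450423406817],
  [2860208603931677942, -73844882706268674200, 477455559384976126048, -1465970827868379356579,
  2546632879717223358729, -2649981742369295572555, 1639568647934160418891,
  -556501601313721789562, 79778532690028617853], [-44451147309259088661, 775825622332734757641,
  -4823521109546571036475, 15660851636238608921479, -30456807545977689762746,
  37507715965156422623288, -29570968048751996258841, 14491981066138654883546,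
  -4024973357292946233103, 484345021795475261081], [94155525087392148443,
  -1272139687588748752442, 7555887684080821094588, -25903301157270643387088,
  56741621188014297156556, -83077138838540951721518, 82483760495762600264645,
  -54946313466103345516492, 23548487367336125167299, -5873398822037855340316,
  648372591578646599634], [-7553536615244958996, 192050152146671156467, -2422533369160819677568,
  14834018526801067799705, -51686583371681995191103, 113017327588836809929974,
  -163100116457397699572290, 158293188290586795560742, -102499206601991350083821,
  42529586739253607680210, -10238369605139139268478, 1088196989023262987310],
  [51264660865986139747, -1118234917213956104455, 10499724226012172608567,
  -55801662867701047955973, 188734599887606740487847, -432205114472829677543418,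
  692506537127844556455349, -786824853854186157403782, 631981179999822674797007,
  -351161993536553422810225, 128480128875783237088321, -27851766183789354109987,
  2710190251072453857870], [-5383904207338605721, 496703192128698897769, -7948195456630117991224,
  60157271874110308903886, -270224963908866827173586, 795700850007728505140620,
  -1617573265843454711388882, 2331828814958979874341652, -2406868285804295979394355,
  1769102687711107968713204, -904747397579028896616340, 306101234969271926173211,
  -61604770443381027730131, 5584700672990057601134]], [[3216346720062050], [-14757643092524814,
  14688391176495937], [125465573025861462, -263063204859205502, 133958456236368745],
  [-354490646398845495, 1160693022758227015, -1216533040442759293, 409578378055696145],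
  [1465597362933037964, -6457699324352527171, 10327702493387947944, -7129264542377989001,
  1796019818857131543], [-1935600063163146066, 11186723789433248948, -24892829105507732055,
  26657773632419955159, -13745517052334396923, 2730984849409396192], [1415406148174691991,
  -9391695435526154331, 25056453387330436491, -34607637521136841927, 26187433957701697408,
  -10303689001359411119, 1645171254637551225], [-1638141396306024812, 15039036748674048038,
  -59429106061195140005, 127849240850781791507, -159728571903842012533, 115427248574192024924,
  -44667067111303182407, 7148423734845575249], [17017498247217772651, -197920624165106134385,
  925484887160046063201, -2335065723328398186334, 3525396326896344136888,
  -3287496022142880332399, 1858467985082285133281, -584294394062479969620, 78408769022595920192],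
  [-37038148607576250595, 466390535295794700135, -2440510251195207214961, 7084119791120891270381,
  -12698195525641322409293, 14672162801245245995420, -10977994124964446469317,
  5146161104094500037271, -1374943185216998985955, 159846855791724945953], [-3253459368080358614,
  21221156129155924076, 91226359425184900463, -1130305845849082206374, 4196897688607175589601,
  -8412908657062397926276, 10302383577465272721001, -7956361465813767084214,
  3795109370899011376258, -1023646447349876969007, 119636478616062925598],
  [-40526056642527335581, 693084476139323854238, -5095579109822727046095,
  21388834600668147315706, -57344040195154631088580, 103717211894084804304951,
  -129757130111066129310567, 112718619224204894993572, -66835166658812745169603,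
  25825394663524251010453, -5864622067084604234808, 593920122627257351769],
  [40615882111045797602, -810814288331048697616, 6915078834740812989902,
  -33865201295855166452772, 107068294710280387245294, -231700638498631702979656,
  353599946155329782785212, -384876025421826985248289, 297432236406604518569876,
  -159553961600444281176788, 56513379304541687514093, -11887688262279013283557,
  1124776969077665542932]], [[443869666375508], [-4249188755741950, 4177454058131308],
  [21690361510049689, -44565820068318664, 22063751260013304], [-145706023071305286,
  479661037578675468, -509249663837908559, 174748529456241467], [104178546283318513,
  -408441599967817834, 590625262954534761, -372942750320262953, 86691869068023702],
  [-31359514939447052, 235243013185097158, -552367015876357470, 571350441394614271,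
  -270692566275270916, 47536145114387050], [296686801286612765, -2075112088847762632,
  5946767047096983995, -8924292951919704505, 7384050897315452926, -3186155700823134082,
  558529736829802666], [-2102841536084539704, 19503144319001640527, -73735779333256216120,
  148598653642321438338, -173358820634978298843, 117554635459665857066, -43043198184572747357,
  6583175210831603614], [8155277053025468163, -84223394170046363238, 363726373049732190621,
  -863229127017409403664, 1237533204870980254639, -1101690182281856576567, 596580279281760305777,
  -180106567820448105460, 23254357450322746944], [-3601824811790119920, 48830760447586409697,
  -275623531056417934202, 855685981186594067582, -1623520554532716632274, 1965971108098967885882,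
  -1527866785400387497959, 738091097187746168744, -201844750563467247375, 23878919069564695603],
  [4705800501354705779, -87933071763487788077, 645474570323647172492, -2552967633587014599624,
  6176789670688246148635, -9705671187935066120511, 10139535028268306769831,
  -7007771245838542627795, 3083886431399030448110, -783660582999329394247, 87612592308370721320],
  [-3012938447774745921, 82349187117296836500, -763895667119903425721, 3699371533510276568361,
  -10952399956576401640926, 21343443214332785976958, -28336161311005405687583,
  25859385456685198876339, -15993102187906126690305, 6411213927961965197723,
  -1503966739849557598612, 156776396390189946217]], [[132710291017224], [-917129641180638,
  883840216658386], [3792400494314838, -7650825583654239, 3739097577879486], [-3217313134638676,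
  9568284181021085, -9236662266412683, 2884989957705013], [-775647276328408, 475374960865502,
  2894294098801560, -3834647649943885, 1266261645184647], [-3709965914203767, 40588511349967663,
  -115875750955543747, 139081591917596807, -75243990429749302, 15137716113965800],
  [105513844182232603, -781686256734859849, 2331683154244452724, -3590643159396072363,
  3017605045121404650, -1315075217870267911, 232592857332599148], [-812804363130669583,
  6746088289821268785, -23247067615206168819, 43127591739391747710, -46572532324834288234,
  29320126930404300834, -9981373283031346586, 1419938570728255261], [1079163784386766746,
  -10619663440622678585, 44227449091172052994, -101511992612026643565, 140470158794142124851,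
  -120175359374963860967, 62179797139693175284, -17816618088254538785, 2166922615195992471],
  [513804641496554200, -1461062235003477374, -10913819682862911647, 71819329493614905930,
  -183732841123352383251, 261531928453150808671, -224495070710570078073, 115917317636624516103,
  -33269109455102807645, 4089625742288212441], [1066220483313366450, -20157751941590013797,
  143538115784066747223, -547034718050142891897, 1277283881805284955487, -1943824058517273354699,
  1974336008813586615517, -1331334718870577490521, 573356749216980894891, -142936251557323241293,
  15706882611952701659]], [[31711139170406], [-303295390636751, 303925434967831],
  [231458302103227, -459072871627698, 216237986355244], [-408134139829426, 1140434052733727,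
  -954283374280351, 233479081012018], [726480358640099, -2659660407958817, 3162276313506803,
  -1558665777854593, 311660594029675], [-20115263828224861, 112520219846388578,
  -249246474399238167, 269642637040777216, -141531531717563334, 28782977969459185],
  [89445490169963627, -624044020288220853, 1764843891075618725, -2590364330090350947,
  2083153924590083353, -871397142614194243, 148340937865558500], [-48458157664885386,
  482126162664424372, -1923952204048274231, 4036001294427346472, -4845397275710681695,
  3350153931333715563, -1241442000557049437, 190979238718980325], [242818604278421065,
  -2482950779020354361, 10840257984514395265, -26351579116006634452, 39034099818916675609,
  -36122537934156772249, 20420094435153209145, -6454729797905126527, 874414360476874443],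
  [-19659271273265715, 1129713481319847426, -8945566572037763635, 32210584574931469528,
  -66107226428862897356, 83963889202390698128, -67497212833112277117, 33550188914368678818,
  -9435069179596128631, 1150240743637386961]], [[7332659267983], [-7508420255499, 7853357793361],
  [4609402834327, -9345075692599, 5006738082947], [-13768199391187, 47340664701663,
  -50588774225976, 17510477642982], [46593677230890, -195963016337506, 293729060766287,
  -188832486889035, 44144594020019], [-320901528457732, 1820801472960568, -3995942127257507,
  4249999372610565, -2196219955089372, 441864333524364], [1461874172391722, -10430764969764740,
  30022810056143154, -44810196182636122, 36651257311214739, -15592691734594746,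
  2697976202086535], [-2755731674630765, 27882084058101214, -114164158160150524,
  247642395940379410, -309313195945153516, 223460309362132240, -86744358989339296,
  13992691215467060], [29609506260402763, -306001094255863314, 1323624373155269473,
  -3142440507548192679, 4492916428372206255, -3971836186410846410, 2124706025487207053,
  -629991984065042811, 79401087229689581]]]

/-- The coefficients of `x ^ i * y ^ j * z ^ k`, for `i ≤ j ≤ k`, of `certificateExpansion`. -/
def certificateTriangle : TriPoly :=
  [[[-53646031228593469206425838565816751819067461265,
  735113513517176977961580168299587387511627882660,
  -5759064849131463856474863536404072203746393464542,
  28547139008707417978086988322125470617555513893614,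
  -96770491330641545724124268655588527778619343869098,
  236784804881573812844532070160332394999195862589806,
  -432768288696743567958802600241600026444285421265216,
  603267363267562131863337218841224045112415627151142,
  -648830073637037886490105447324654280776168565119256,
  540703233894325535244249544533008689472623914164688,
  -348279000243305816024723741834118985510583133742130,
  171716360807110856900956616923446460626136515288828,
  -63582291497779035386988117097732021204491909204922,
  17105686925621919579585661094606252431583934137858,
  -3155751155499206771779125677960248415689511515314,
  356951869434010896235468095694452276215345012736,
  -18662362209754995915238063574638704325452101298],
  [-8258162719309868446497423963765389729588685198667,
  60736451672131457667800575576640522960467250303684,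
  -294643524510368654090679688859472210477272503282677,
  988339555379074145508228744443235382359353360629033,
  -2403654782130769290833351780816594157058486610575679,
  4378624255587722391181570176870500752011143578584866,
  -6097107666989366509716122213371140174135498010325185,
  6563538608894042700174901661267305834506740545984217,
  -5484840029899641289112103946432066466890696070594465,
  3548968966496043945648357768835361569726375855051313,
  -1760791884863529892069705742882856290430414569016806,
  657190855930943598013780771169585385351383665704607,
  -178517465163505963359437472523885603112498705927555,
  33307387858546951904650667225021561485406530486435,
  -3816272922748559187278626597710724286802769392064,
  202420398980669440437143935795241522764541419971],
  [-443619394162210314384966352923274173748537572517913,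
  2166948245505565149612003300276963402014431501002905,
  -7345184018238731049185846926883162051059465608198428,
  18094276583517964036828165842490423265159643201962624,
  -33461259214673119333273528290689327287595262296057526,
  47402897862083945997091119083679134087085603846770180,
  -52025865840205046818307168782843317663180141459892002,
  44417064762161105002827934501607792549591390277586666,
  -29421920563132065012610996273062709572999147697408531,
  14972802343317376458030686549220613434542516021645839,
  -5742637245843008179908777216783303508483527578820191,
  1605717851187086405647580411170714463713569482287412,
  -308870825527816409998144036111685440652203549519659,
  36536584600277378022010156601204160131993022067896,
  -2003155733116219494958169953255797576577199383575],
  [-10672980402833500647452453637583898461619356174993494,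
  36478803123957875943764304227753396492651244504636913,
  -90702113385131322437259234285945259994938805691661008,
  169536510524237294322021177771535621804904540346305601,
  -243116642304385364585493992873119964432734069705629242,
  270490988624665860812772174691270943432858065836486060,
  -234429021886700770167547089488131352699581947626511314,
  157841286028151562819664685346230095285733303847750908,
  -81742158645407868111426388609068823059080066406000376,
  31936747620090408822292406060304458972983106597168764,
  -9104575722281468260317328926092322750150757122278394,
  1786824656038010433729712902404612964766354985143543,
  -215763441995982753552537112963977469664491862018425,
  12079998122958770112447444874785357878768763462009],
  [-125628818797760297912370979976379115616934719610186996,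
  315018762756200633755375079063195336463957630499501641,
  -594620102578014137375573454127376635883211349834498613,
  862342000821317025206988158545622754594995527858518409,
  -971686138518136190874086204622813938005109852366029991,
  854037693691574884553940058306723446559621390788844272,
  -583865557390484914886105649123676505496360241705904229,
  307354941046302479790225981600344013853184932710084912,
  -122179458148072679128819192150067255584508122990831109,
  35467211551509346335115730278567771911687916959563678,
  -7092378039113280044125583589279128770751811601120943,
  873079189911383519104923840133985517840938594702150,
  -49851517154887379380655958354382121181473350278453],
  [-797272327063522188076180740355506096679205891493353620,
  1520805630854217577646309557600874637748583593835563449,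
  -2231747933540095255406732375087556483230547255867645865,
  2547809890412854850682724626766829382325459203509194218,
  -2271392651087041933617732355661090866244210504607901708,
  1576684026113153718474749489958306225211114970812965696,
  -843470374844018557231690707958733580914630574002382452,
  340992865926462929470245125696389032706123817308319254,
  -100728702902144434128267466754346815903249073238473643,
  20507245741437604448312646731206218040814612660715533,
  -2571140475502833450699443979098379668250149118411461,
  149569193961132585067490559455580017077908562719327],
  [-2934672085484607769424822384620126036802104327413285348,
  4361259129150749474469385907426381481539455260410889463,
  -5047124976543543005197013659475673048794118994066681529,
  4565218935849484546479991772513599834176897203258006637,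
  -3217627682967151609636176615216187885089697389100036945,
  1748879306149224109961576989612310039289842147107377594,
  -718726881217464713799170081661146580968462028184285571,
  215918853305459073838822578246063210284635398764853611,
  -44722273320493252113743648237552021485382677355241515,
  5706415106244141787811370539601652779638429296048796,
  -337936448960046751668449804651606543776493221389561],
  [-6568780569144353198616280150304122771990508545559427270,
  7709763467545681778410177066183061335773491643021068177,
  -7076913943397861214702557408495733803066008134891809287,
  5064346057871536165499132379787865991889185309258730832,
  -2795999823751246969391707991914294965892757298198834838,
  1167584600787630808193104827402700848430303261273634206,
  -356535542936030025495977922333755323506704191535167073,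
  75085907222321588244679443370829879984775222301701467,
  -9744487153763175501805035785778565023965865719207669,
  587143436231091191657688914344881934626412057599603],
  [-9181245613701502661173324172414904976725568819406780270,
  8553764266254464339250883861930277357542790656197048038,
  -6214607209161511718908427376553580332090475496395707727,
  3484284462357326856709202887832991193375914684490569717,
  -1477935991769944935213225625812756206675933501780149069,
  458533585732163363540001645496339400611235993335328590,
  -98141534581609544805596107923421692165112631465278051,
  12948725357532422902122599404970480561471920741758814,
  -793527160675137335301818809415549379727422487455807],
  [-8089415444998321364098291251235821204440266242061749857,
  5966564255934579579043524933508115254599726864896886883,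
  -3396471846937999832961376806930410910567133909575850067,
  1462996258581398522251920654975720441618464831143778039,
  -461026410257236524085925349900107091564089846539208543,
  100253338637816914723410207695055809452509156177802526,
  -13443819563136537878817236125405392675259386363147731,
  837723809010666122683926652181211420469473937274274],
  [-4467569108742553040773913715770635577838489441139902020,
  2581840817959471720203354094638233043480595158059803658,
  -1129138174249228577725059908145181222630096033031866934,
  361341398026374896009682201952250875987443632884122975,
  -79818506229638161780197761180551224683762164866399371,
  10876850995077556872290432735797945878008378003246333,
  -689056554487116404460352463617556880732150509251647],
  [-1514724077879157173402104999523226519485585289771200913,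
  672562375786103992113602785204339690927656328303284052,
  -218556658970039967969533332266396940133425886608920826,
  49037782777074574690399391680925283637407097543355693,
  -6789946171543874982113824630422373561003148167881395,
  437256672904793018404485533934009229195642885628055],
  [-303207574775256815687966336755328533348503554724659052,
  100057535128918089044010459864016399448018658635297203,
  -22803404128268633903009758022227930770831803588525227,
  3208104862438818402719424437965683652486158461637409,
  -209979687636109291257420614079233590360565066927301],
  [-33534353866934444639533544589520135416271985461935820,
  7763284069596408707252865974057409338166301776728501,
  -1109650870202239670608695660481013127292785882484490,
  73806201958921742643612969726843324865031855658363],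
  [-1825726787778826258135121873366239959171470474098475,
  265115076022524332942177626217289971038643958391118,
  -17914500710954688684894739544424625516215655917855],
  [-39105016767716782331140985176385092309742664617291,
  2683564204022387344699481496238941529252384700136],
  [-186940252274617359172535933120744137553752184559]],
  [[52155059592375903678929745139908564636572984349864,
  -288114053473068784951998318224997220091685499389336,
  1237332866218937025593989716631193652869578265075724,
  -3816146919987735536625546309719389032280628014624368,
  8575831326003419344921455862257378038536426416857484,
  -14388243108206184847308928899832395479592671771861868,
  18327636069336206490521656613986944922575422128331100,
  -17871238156792721659549188172217398302671732023963476,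
  13345016705038562903944125024638016695701045548573804,
  -7572843962311885935398435250425028715207593538443732,
  3208870633714431066823296269956250624521736512679760,
  -983417093151577959778009193618643461524453608673644,
  205912555070399333259317845302547750681282300316568,
  -26355954076792358364784507253901557931336599104968,
  1555477585608557457830921129775144031248067301280, 0],
  [1328519187423862232244191703383171064517059533725302,
  -5421910617709747758662809161212724030377523153635322,
  16466006937976721026061863359497011293175869150798174,
  -36731000295762976230720831621742575098672575677128646,
  61362989444258602346959062435956661483660488461274886,
  -78002478088063088403188940223817519872167003794326170,
  76056520541565294997327955576257223427404931263822676,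
  -56902273855908042591867792071044984785863735586422664,
  32413827200114777336334695070325699268892069159365238,
  -13813400874962983829573051092104890027372459366076522,
  4265412515121100045741760528595171999214616596679136,
  -901478539117827170012684177043688487282801116985694,
  116666107844462941410392090130454279210684347473064,
  -6973125221538553129084601177336771219463585418416, 0],
  [22280795940333436439278610921610659649429541444373646,
  -68705465335446497779739907186455746989250296337509462,
  155767924806985182908262161350769688468203872609312956,
  -264809943146555556325722020692720786378867428249325584,
  343113713423776556597921989379360774139993243119495796,
  -341639397260191389364679898478619434588599083279760876,
  261513385624402652533253165754666059870226651916107396,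
  -152707693250823029354920895133730349640786638195964552,
  66836178554776116236374937415136580235565422718502238,
  -21233849521446918501417943051453434614462951569196682,
  4624907432868998857023576749865995898874579415042040,
  -617774747924014845006617082692021464126973811068670,
  38162226498001283456126998554556785146773970531484, 0],
  [214593916294006240197199101239537603072791926770403846,
  -492037663848034683708147142648501836066002669986965528,
  846277483082637692853791709480274960273063216931179362,
  -1110542494488688806980866606526946479574501966292652184,
  1121347086762056655672435916644113586653313929978328972,
  -871613010196499473328639343757407500787316718072146758,
  517515125275583359467682684118866784974748680687790388,
  -230594857977498277009625177019940639543242370253472306,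
  74668556956648819380446250519772427268926754504273840,
  -16592708730096426441246968177109098623546660142883576,
  2263156174774325471138208908654963542191799000766136,
  -142849735211371917169995162567563130658872915222432, 0],
  [1139199017935975979354377405422001821742327019630455698,
  -1979646310634239850300143641900486208334990539327699008,
  2627908526189262937335437480748104067757897154635365642,
  -2687934224999465658890549153831839183942196726986595184,
  2119435279744303678383185052601363724938037226673037142,
  -1278290338588208341901110327819188079727036858210666388,
  579313299480989371146666949172675886640391031869469660,
  -191005651091634105627267428765839816530012822805637316,
  43260123951816723457798874689110717526486380241820616,
  -6018537224446157974572252947517286440276580263852996,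
  387734088893699498146132011350203663263584094202128, 0],
  [3478055860825343436677665018381386963071897573511882570,
  -4673276949813593727647204322981634817199746628951763584,
  4844361914532444119428001011335526438166904667048619118,
  -3875942709981972604111690772302965739083684137073281958,
  2374754170058499716929028805710498420378651634283815528,
  -1094383847635621008628189267062413834996190610018908450,
  367228750185792402728519493159635136046994902067168430,
  -84704928103782925966243295347272467491583305831508544,
  12007988906428112096379873957049761209965585014669234,
  -788568852119169203751229853253198988173016713360948, 0],
  [6361830296639631868748939411534364155223070486017432414,
  -6688028655613612137472250614272415478557386843659016084,
  5431709521434046233141611406097982099820878316473124486,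
  -3380833810861186849759597032207586040646838281177722418,
  1583837340480815007594111080805725576205465132669303624,
  -540557108275532406269409178769639750890696705163882196,
  126866693967345946226957812647240428586616720496707062,
  -18304726938566753503905585814619926615124920573435602,
  1223681594115989785802166489723529577464762745113800, 0],
  [7135017953735781958675495221187767825303560936170156290,
  -5883748933582255269196836188749826163359731505170690686,
  3720080142563723802989552404273362131968710263531033040,
  -1770879729036544790714801092512537362674975785367318878,
  614274323932191786730152844027865672079221537707140366,
  -146542817338689324904098300952487434449465473511268938,
  21493284683135930712332533851171873540742804658153688,
  -1460636181960394517394478958102831615232076669472448, 0],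
  [4927321727272855566512015306201243389775714898182976360,
  -3164020725261235275110190260868761739332153621506549680,
  1529681848226570755188021667697926809887729459829225618,
  -538848369299751279490766115453003942517729906146713262,
  130530475875459492877357898273810582014699779630322788,
  -19437469568125749284511582365580259594090053599473308,
  1340975154330551697719539581634162390901277334880364, 0],
  [2062922075480454205669048231150874504007726359958547782,
  -1012333497443924525190243340229762879228718337775353212,
  361846718770030689454682512018239307699158438711589734,
  -88913376488086298537894086364535102259062915790762752,
  13426674405034883820120762267057498254795905415566332,
  -939120996084758247075499708641775447193293559280000, 0],
  [503957262961428955019752228114830432863932843054186626,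
  -182635587411400469046764431442064285010596552306118794,
  45478058733059667551481299635765775503967421565305612,
  -6956486198493943792167240178446349086256897211052552,
  492691678234784680355995821602777546153976064505340, 0],
  [67057575692461991889311472266145524507056692394242642,
  -16906300807714163259327867899746379262817664116266312,
  2616808129336800716433770330831519562132867155471802,
  -187448454212223145367583595775685294346445185695408, 0],
  [4312035038120250255436582096261143070245987983516634,
  -674725698315744950701655756043678524496435931668744,
  48829981851141860303171761997513404899627933962844, 0],
  [106639388406260825557959935560200292243007839471044,
  -7788996569215861385128445224466868235034452803084, 0],
  [573632506520632615711782726249187961330345881368, 0], [0]],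
  [[-3373166402338950683677358042883796186508131739352000,
  10170886235539313173579280400051065918517763615943040,
  -26907950436249609745757529382216932644771729764291440,
  54094304523548850161436313923315400646085559714219920,
  -81476971442099100925622190770020765202233028348297280,
  92609475220209651656376975724687753311605285873739120,
  -79703633359140476898444041312194945740174826882999920,
  51683222191260831351039646454587148963653554852965280,
  -24862271784145583130062620192774607273456814730012320,
  8607088421905981682268755670768841112496257311434000,
  -2028025069260583773259919104966961671586011237018800,
  291265877054407692302599068405765745230634656027840,
  -19247927818371756062716547943058802842219127382480, 0, 0],
  [-25590226334201206229294064356876389835604334783915200,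
  64622645115583550029358640646582916723137714404579360,
  -128155759854885938428300322426283410972163178749991680,
  191622825925608714628466291567453974203570657603991080,
  -216715669095696070086170562450949408373147923958260200,
  185930058865659171852705343746701125275847370706364800,
  -120420470827498680301121367107069505825392784762750480,
  57977181911509611678476835510033445844009772618037200,
  -20130601450678738851073670004665604646582156079705520,
  4767544421206606487953132088058889644824684994663360,
  -689721975114161132458550604779329297813713588768120,
  46011863996419375101559779751730056177978790936640, 0, 0],
  [-165472762872843629932353307578150609842150467738454640,
  334424910696529772401768540134921272767901492075617680,
  -509438006572896490761530446815057061988234544765897720,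
  587396330104168355465647790492806215528615019205641440,
  -514478396286280478444998876449738818443236902986202880,
  340713410822826759346179996630341247240619417976713560,
  -168020569267552909347380577148488329357976360237701760,
  59859927516481075006566676396754118508908322581534480,
  -14571010370038489380666887630195874296349024851463120,
  2170133193880885321683975779567348226061723204258800,
  -149259623529420653812673806725067280374118843406120, 0, 0],
  [-685110484599961197486881723566188138336497968111492200,
  1055320846515086119261123179333899539139460935354406360,
  -1230351193290415295915417713424112792529897833293305680,
  1090396875593410624472200156234085396261704879521997800,
  -731434743478120028364206571179543597123421645844262640,
  365792581841975393420113726031191520551550438904892320,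
  -132325382930138042235853982640844712166934280219565360,
  32747793972410558246517577800841715356038331930154640,
  -4964697489802249261684093396245808903571774647830600,
  347974210105282241289657959056113153754160448761160, 0, 0],
  [-1640188229331042630455412528446049353521960056500993640,
  1929862315480095612388156514879049622609039163987160240,
  -1727716608257049236456617580756326830227143900332868920,
  1172120127015944245501289348196101688271576753733310720,
  -593628049606952346783877836474533129070215892418874400,
  217770520347524601420446624433897418754348326231765080,
  -54726089934390534403982351670061407348481366499276520,
  8435271773285879420591008127628971112236236065891840,
  -601750481483274314481291699061676193090679279860240, 0, 0],
  [-2292304531859715074720173012715197999859217806975445960,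
  2073411261713242812501231401378953768237943915014580520,
  -1422608846591868671452350077180695661906250467986516200,
  729448780203898338062752954578704515434759135550162800,
  -271214914761956824687723030461452641371234509312407800,
  69148268988267081632137187456029249404838823215078080,
  -10822861349784761918501861773503436476126423473947560,
  784554852401095327665931956568269538265318397097920, 0, 0],
  [-1895823762872397741640295784292046198767099272895677480,
  1315755263988193519180552184888347856487376851540190200,
  -682891170808408839787625713216366115421582142550560800,
  257167215387616271306510903608350500881809923130609720,
  -66446789607875015022145066719474355902232711815858120,
  10544358289327114221570347220513005361805973443662960,
  -775207179572747942539711916087692248941306838415200, 0, 0],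
  [-923879265695660252207076135319390124615719997282558760,
  485210806366070935196550482727642995705037564135351600,
  -184921350166305237980343710753814850949424509267794200,
  48357093671902117958726773581640049926330247812155480,
  -7766159977913347890731866873367601385250677182450360,
  577763550606660119698654399016771688228606239235480, 0, 0],
  [-257764416412593941871358930461991294648575646202938080,
  99326110386013075060088538328908867350882832568235040,
  -26248293040695059780544952026623133281726864142593760,
  4257699471825621416242989794068503729670972279730640,
  -319744141326060679113263642790227485260149793628320, 0, 0],
  [-38657988898642506755899743215371297239842555328887760,
  10307287391071229481155490012258150086246828997952080,
  -1685081276922548198926240854622074661162329790024680,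
  127411909041303244522212712245323560384610718338280, 0, 0],
  [-2768247337620188407598551921166985351611001217261680,
  455136365419618768246505161718785857526827183011520,
  -34557440445706083772166645004119705222685814184520, 0, 0],
  [-75095485314447491268005162811223533487170106184760,
  5710498354348537080571150711100193679130530216560, 0, 0],
  [-433779016383165655454889710909713906140708200040, 0, 0], [0, 0], [0]],
  [[33779467509165555941282530325203583961080616234527040,
  -61491900394669752583365632901766573016129600171072160,
  104175888289191105566415960135486862205233777631894400,
  -136723287769874677140650578065952257641946643935228480,
  134578892426289684825788055975905333094125322349204320,
  -98601243456458878467530375764684636268768399473231680,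
  53059867749266690943477976434680591135852236522130880,
  -20388993868599250884896104697878636111393016386608480,
  5300339789949078533608209668885050053449198633960160,
  -835889283578584891446087070608103567507839945131520,
  60421495415544191690489749117981485390254025644160, 0, 0, 0],
  [92718434446770511993545554848502136008212260225642240,
  -150104133964765135690288305529979913319273528088506080,
  194142103753481423721942328922377368367523136418136640,
  -189143837789210685654034208951239386319634664199802400,
  137305825128856225415254853193933381606985853194938000,
  -73281156517209114457294239214411787157799457408651760,
  27963357162444656554136838336243577526097767400815760,
  -7229776151547653457787798813834911742736685559596240,
  1135893049522167570971688621234517212732391084782720,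
  -81944094126484105112896121576683359375620300429760, 0, 0, 0],
  [246956075325531518085111974447619155515264997184065520,
  -325212814635917119264346106978483841271131484375421360,
  322120183487427624699636320521656387875823414884411760,
  -237726677162573796273523233598414265197204474149240720,
  129064315637218482409331168916330424197152615104222560,
  -50142364634963399103880673275735680648995369732668320,
  13212118929690585623115246958347566048690732550668640,
  -2117699415338920832566577160904192034412089001323520,
  156014950922298563301460717927173483310716138748800, 0, 0, 0],
  [432373542157223271414540391138550638934269906395951120,
  -430792471531511034376798691241756834380362511989023360,
  319421983351874795128771951700756342927126478485237760,
  -174144276327017926794474122073323605680393660310541280,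
  67927006100121976282233183354558550028137225223231280,
  -17970946061825695634178498957325660884527692009240080,
  2892989294732895529056806015229975302720113347856320,
  -214165284660539237150062634335131293141499307680960, 0, 0, 0],
  [430215282654379228018155104883503529026199422791983120,
  -319330863103101235884363280961448399713998432902197760,
  174150957197487535125493128131536977070931467307451840,
  -67920363137545531304276914823282675674538353003299360,
  17963335489077028576418192747700220324663967715420960,
  -2891157914056384553226852513641201640042940797937920,
  214084185220377040630399805174291056049533656670080, 0, 0, 0],
  [236858729630270334900390229551277723917947361327408480,
  -128888543098077341130526697633228903750253402555816960,
  50086475272797716459946272576891175682781082766101360,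
  -13182800063510233759225355083597742644713086281446720,
  2109541977996246520011652250464335325173242641771440,
  -155231387585264496366877469493059954462462242730400, 0, 0, 0],
  [69796355299216974743935763100051325182927119678724960,
  -26915405563712922375824574944786266022222468457260880,
  7009290949816838862155995690427435019988911624934320,
  -1106607383370441444868585782066998343263129338369440,
  80132789950015194385420125131272170042090251495040, 0, 0, 0],
  [10250148842128553353496192299646481072690636493053840,
  -2621244321631392694306324905816655129109727590214960,
  403758365506577607866564119502728544902462827154080,
  -28321622669638727022629242348711277240963477139840, 0, 0, 0],
  [651710017621874263453056255564751866831784746948960,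
  -96301329265313374832162074092420643222621418566320,
  6363279620857234485002928664748868957868211010720, 0, 0, 0],
  [13284446644252667626021993738382831650476016040400,
  -780832303344989287323899733034544488528298443680, 0, 0, 0],
  [35018731686274741252483714350687856377368900160, 0, 0, 0], [0, 0, 0], [0, 0], [0]],
  [[-68523735016492503280868657187134004245791614988026240,
  77644507730826162317762734492110205585720767282581760,
  -84141597510024531046383031132631491201717159917315840,
  69781038162425674701332283953401762492032077671334400,
  -42067900962664000831608211656373865212409917168270080,
  17874042857538326340903965205791303390315032949383680,
  -5080504047538736100747328887069232651180733130777600,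
  868298363115063970747028076916807280882592116321280,
  -67590499399684108179772125973288541026561486663680, 0, 0, 0, 0],
  [-71931282569305210195032062157767089833050133832126080,
  74568207235187178011991356287235477467602975244967040,
  -60846865238567532267942409489508411430245180316733440,
  36149036693606717733712155940003183056783197633504640,
  -15123637740369124257801473789146855881502386010369920,
  4230401217783057087738817762923589637102796283952640,
  -711546823805634246448027195390917021416824343721600,
  54561902773429908966513420386084684652528455343360, 0, 0, 0, 0],
  [-78616974407784859571634377466058882178962627238634240,
  65120540537748249593143240294690668403972227318723840,
  -39169925513763275391414491936225014145084647226856960,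
  16578971476340600424774804765317785612443788790238080,
  -4691593152127875653168580296429717278963513780485120,
  798691973813051996055997180403189089160647272485760,
  -62037523692314828937621905266431511745888757726720, 0, 0, 0, 0],
  [-54103556938386712648498968995641950561660793433869440,
  32477585896284762216007927382090825844601415888146560,
  -13678853365262798737742913822969998662994410113102720,
  3842054538803470971625002056415283628174723669520000,
  -647659856177026970560725016425900538263192595562880,
  49710552345382764131460619855577340940441880835840, 0, 0, 0, 0],
  [-19351946271207101515999990410609807211667380647594240,
  8058775963607512059092835815915000257073963204087040,
  -2228497301328738068952646727316646159183970809428480,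
  368090847653713172776483613186627090983992382523520,
  -27540368058650243423825057428555133515488254280960, 0, 0, 0, 0],
  [-3297538405152782095950541291575232146810606868010880,
  888786345792002478081868145160928843306248714174720,
  -141555251970616415378649542430544016173648332282240,
  10066725030617439167240294614969726578511032986880, 0, 0, 0, 0],
  [-229977278099946960334388235699283824817642998111360,
  34326045732516664605624912365127946588649554707840,
  -2195934388968142681358578999070936677009145786880, 0, 0, 0, 0],
  [-4532867480988728505428490128810479515372183456000,
  221498462929446087354308702001405493648113477120, 0, 0, 0, 0],
  [-1718985271510810097093824434549315621659704320, 0, 0, 0, 0], [0, 0, 0, 0], [0, 0, 0], [0, 0],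
  [0]], [[29209540051701530487175683293548459833909862535800320,
  -20311361334074367281153441735907123428223326567838720,
  13575900237313646110618441429019118183562272729192960,
  -6556195444018575373013742458973258985554952911651840,
  2091931007195304700342394866640069464331847852387840,
  -394957101401181879791808469459295073435842213130240,
  33353355445570150170777069984524097180676874511360, 0, 0, 0, 0, 0],
  [11300706322630953153995271556992437902485325402986240,
  -7274157103277537332134905620646626281708386960256000,
  3458614412726141988741456723135414982788458241722880,
  -1083889307801384926604370519936384298702419085098240,
  200144599018889454446372894533353317017866157593600,
  -16438243371247223771747392442362275348517454895360, 0, 0, 0, 0, 0],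
  [4785077315581955843300991294994045339586480455764480,
  -2305568423527629199543926241651150013779108590631680,
  728981222251170049225677280154621263279081096788480,
  -135444822788318624102721113838101534807425710827520,
  11169904726658716119334586132054531981239996581120, 0, 0, 0, 0, 0],
  [1106920298067969376079577303844058012821997042357760,
  -346340404647365520621931118282820246729536729710080,
  63258778147928868704845453209033365966347690798080,
  -5086116892821063065652369769901275285835961219840, 0, 0, 0, 0, 0],
  [106410354778852851944220623828073360483014742693120,
  -18906679064862294492632745524828970634456988805120,
  1458081379064419031587885038759027571124889980160, 0, 0, 0, 0, 0],
  [3216104233781578468676701583603099438854106634240,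
  -230762292303550705486428881048937394574253035520, 0, 0, 0, 0, 0],
  [14368974317402173568488971190248073463423496960, 0, 0, 0, 0, 0], [0, 0, 0, 0, 0], [0, 0, 0,
  0], [0, 0, 0], [0, 0], [0]], [[-2128530246902584121572638693244401641549810602567680,
  839095004459555195774075598162348078147835081205760,
  -307246153248189297906058865456498744834320019681280,
  68243159765031036482634054294586684006629425848320,
  -6828650030184498182663637635005983611227540592640, 0, 0, 0, 0, 0, 0],
  [-256370087521116175897227003453940891958304354109440,
  92810422996921088099076943180962827317734665149440,
  -20567442688404300217181028284539497133427644323840,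
  2054355466230393881674843506860693241843397340160, 0, 0, 0, 0, 0, 0],
  [-34943074413907917862723458549636359795693673722880,
  7913536523810625452245357632018022631650357278720,
  -801237632215922014473876107838562149435101660160, 0, 0, 0, 0, 0, 0],
  [-1802357816842596683897204068412264667182889830400,
  182536068703541776144457226488962973616995066880, 0, 0, 0, 0, 0, 0],
  [-18409135366038210603498466794187939244709872640, 0, 0, 0, 0, 0, 0], [0, 0, 0, 0, 0, 0], [0,
  0, 0, 0, 0], [0, 0, 0, 0], [0, 0, 0], [0, 0], [0]],
  [[10954063618226716736759500225673217357577403904000,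
  -1640556862418626696105203325982121194100303974400,
  144492339390082669332264507787923926037123686400, 0, 0, 0, 0, 0, 0, 0],
  [182283280012417977873557027443683716382317260800,
  -14807871158219631780918398684364779700981811200, 0, 0, 0, 0, 0, 0, 0],
  [1207654261636791678579335072730090298915584000, 0, 0, 0, 0, 0, 0, 0], [0, 0, 0, 0, 0, 0, 0],
  [0, 0, 0, 0, 0, 0], [0, 0, 0, 0, 0], [0, 0, 0, 0], [0, 0, 0], [0, 0], [0]],
  [[-2512541181830983588576962603042161499050803200, 0, 0, 0, 0, 0, 0, 0, 0], [0, 0, 0, 0, 0, 0,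
  0, 0], [0, 0, 0, 0, 0, 0, 0], [0, 0, 0, 0, 0, 0], [0, 0, 0, 0, 0], [0, 0, 0, 0], [0, 0, 0], [0,
  0], [0]], [[0, 0, 0, 0, 0, 0, 0, 0], [0, 0, 0, 0, 0, 0, 0], [0, 0, 0, 0, 0, 0], [0, 0, 0, 0,
  0], [0, 0, 0, 0], [0, 0, 0], [0, 0], [0]], [[0, 0, 0, 0, 0, 0, 0], [0, 0, 0, 0, 0, 0], [0, 0,
  0, 0, 0], [0, 0, 0, 0], [0, 0, 0], [0, 0], [0]], [[0, 0, 0, 0, 0, 0], [0, 0, 0, 0, 0], [0, 0,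
  0, 0], [0, 0, 0], [0, 0], [0]], [[0, 0, 0, 0, 0], [0, 0, 0, 0], [0, 0, 0], [0, 0], [0]], [[0,
  0, 0, 0], [0, 0, 0], [0, 0], [0]], [[0, 0, 0], [0, 0], [0]], [[0, 0], [0]], [[0]]]

/-- The symmetric matrix whose `i`-th row, from the diagonal on, is the `i`-th entry of `l`. -/
def symmetrizePairs (l : List (List ℤ)) : List (List ℤ) :=
  l.foldr (fun row rows => row :: List.zipWith List.cons row.tail rows) []

/-- The symmetric array of order three whose entries with `i ≤ j ≤ k` are those of `l`. -/
def symmetrizeTriples (l : List (List (List ℤ))) : List (List (List ℤ)) :=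
  l.foldr (fun m layers =>
    let face := symmetrizePairs m
    face :: List.zipWith (fun row layer => row :: List.zipWith List.cons row.tail layer)
      face.tail layers) []

/-- The negative of the sum of the three-point functions of the certificate over the three choices
of the last argument, in the variables `1 + u`, `1 + v`, `1 + t`. -/
def certificateExpansion : TriPoly := symmetrizeTriples certificateTriangle

theorem isZero_symmetricSum_add_certificateExpansion :
    (TriPoly.symmetricSum (expandThreePoint 18 (certificateBase.map Prod.snd :: certificateBlocks)
      TriPoly.X TriPoly.Y TriPoly.Z) + certificateExpansion).isZero = true := by
  decide +kernel

theorem sum_sq_certificateBase_lt :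
    (certificateBase.map fun (a, _) => a ^ 2).sum < 54584 * 2 ^ 128 := by
  decide +kernel

theorem horner_pairPoly_certificate_nonneg {x : ℝ} (hx : 0 ≤ x) (hx' : x ≤ 3 / 2) :
    0 ≤ horner Int.cast x (pairPoly 18 (2 ^ 128) certificateBase certificateBlocks) :=
  horner_nonneg_of_coverCheck (D := 128) (n := 34) (B := 640) (e := 192)
    (cells := [48, 72, 96, 128, 152, 160, 184, 192].map (·, ())) (by decide +kernel) (by simp)
    (by simp) (by decide +kernel) (by decide +kernel) hx (by push_cast; linarith)

theorem isPackable_certificate :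
    IsPackable 128 192 16 640 (2 ^ 40) certificateExpansion (multiplierPoly (2 ^ 120)) where
  denom_pos := by simp
  denom_le := by simp
  bits_pos := by simp
  weight_lt := by decide +kernel
  degree_left := by decide +kernel
  degree_right := by decide +kernel
  norm_lt := by decide +kernel

theorem nonnegOnSlab_0_1 :
    NonnegOnSlab 128 192 certificateExpansion (multiplierPoly (2 ^ 120)) 0 1 :=
  isPackable_certificate.nonnegOnSlab (by decide) (by decide) (cells :=
      [(48, [(192, 17179869184)]), (96, [(144, 131072), (171, 0), (192, 0)]), (144, [(132,
      0), (160, 0), (192, 0)]), (192, [(192, 0)])])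
    (by decide +kernel)

theorem nonnegOnSlab_1_17 :
    NonnegOnSlab 128 192 certificateExpansion (multiplierPoly (2 ^ 120)) 1 17 :=
  isPackable_certificate.nonnegOnSlab (by decide) (by decide) (cells :=
      [(17, [(192, 8589934592)]), (19, [(189, 268435456), (192, 1465000)]), (23, [(182,
      134217728), (192, 0)]), (55, [(139, 2097152), (192, 0)]), (71, [(162, 0), (192, 0)]),
      (95, [(149, 0), (159, 0), (167, 0), (192, 0)]), (111, [(153, 0), (160, 0), (187, 0),
      (192, 0)]), (127, [(129, 0), (157, 0), (165, 0), (192, 0)]), (147, [(135, 0), (166, 0),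
      (192, 0)]), (192, [(192, 0)])])
    (by decide +kernel)

theorem nonnegOnSlab_17_33 :
    NonnegOnSlab 128 192 certificateExpansion (multiplierPoly (2 ^ 120)) 17 33 :=
  isPackable_certificate.nonnegOnSlab (by decide) (by decide) (cells :=
      [(33, [(163, 0), (192, 0)]), (53, [(162, 0), (192, 0)]), (65, [(159, 0), (192, 0)]),
      (85, [(136, 0), (155, 0), (166, 0), (192, 0)]), (95, [(138, 0), (156, 0), (159, 0),
      (166, 0), (192, 0)]), (115, [(128, 0), (158, 0), (161, 0), (172, 0), (192, 0)]), (121,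
      [(127, 0), (157, 0), (161, 0), (176, 0), (192, 0)]), (131, [(129, 0), (157, 0), (166,
      0), (192, 0)]), (155, [(159, 0), (192, 0)]), (192, [(190, 0), (192, 16384)])])
    (by decide +kernel)

theorem nonnegOnSlab_33_41 :
    NonnegOnSlab 128 192 certificateExpansion (multiplierPoly (2 ^ 120)) 33 41 :=
  isPackable_certificate.nonnegOnSlab (by decide) (by decide) (cells :=
      [(35, [(179, 0), (192, 0)]), (59, [(156, 0), (166, 0), (192, 0)]), (65, [(157, 0),
      (159, 0), (166, 0), (192, 0)]), (85, [(125, 0), (157, 0), (174, 0), (192, 0)]), (93,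
      [(127, 0), (156, 0), (167, 0), (192, 0)]), (105, [(127, 0), (158, 0), (161, 0), (172,
      0), (192, 0)]), (121, [(126, 0), (156, 0), (165, 0), (192, 0)]), (133, [(133, 0), (156,
      0), (157, 0), (158, 0), (161, 0), (172, 0), (192, 0)]), (157, [(157, 0), (161, 0),
      (165, 0), (180, 0), (192, 0)]), (181, [(192, 0)]), (192, [(192, 32768)])])
    (by decide +kernel)

theorem nonnegOnSlab_41_49 :
    NonnegOnSlab 128 192 certificateExpansion (multiplierPoly (2 ^ 120)) 41 49 :=
  isPackable_certificate.nonnegOnSlab (by decide) (by decide) (cells :=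
      [(51, [(143, 0), (157, 0), (192, 0)]), (59, [(141, 0), (156, 0), (166, 0), (192, 0)]),
      (75, [(123, 0), (157, 0), (163, 0), (186, 0), (192, 0)]), (87, [(121, 0), (135, 0),
      (156, 0), (161, 0), (180, 0), (192, 0)]), (97, [(127, 0), (134, 0), (156, 0), (160, 0),
      (175, 0), (192, 0)]), (109, [(130, 0), (159, 0), (162, 0), (173, 0), (192, 0)]), (121,
      [(143, 0), (156, 0), (192, 0)]), (133, [(137, 0), (155, 0), (160, 0), (162, 0), (169,
      0), (192, 0)]), (157, [(157, 0), (158, 0), (160, 0), (162, 0), (169, 0), (192, 0)]),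
      (159, [(170, 0), (192, 0)]), (179, [(192, 0)]), (192, [(186, 4500), (192, 23000)])])
    (by decide +kernel)

theorem nonnegOnSlab_49_57 :
    NonnegOnSlab 128 192 certificateExpansion (multiplierPoly (2 ^ 120)) 49 57 :=
  isPackable_certificate.nonnegOnSlab (by decide) (by decide) (cells :=
      [(57, [(130, 0), (149, 0), (158, 0), (192, 0)]), (77, [(121, 0), (137, 0), (157, 0),
      (159, 0), (161, 0), (168, 0), (192, 0)]), (82, [(122, 0), (157, 0), (174, 0), (192,
      0)]), (94, [(93, 0), (125, 0), (156, 0), (158, 0), (165, 0), (192, 0)]), (114, [(126,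
      0), (157, 0), (167, 0), (192, 0)]), (122, [(131, 0), (156, 0), (160, 0), (175, 0),
      (192, 0)]), (123, [(139, 0), (157, 0), (161, 0), (176, 0), (192, 0)]), (124, [(144, 0),
      (158, 0), (168, 0), (192, 0)]), (156, [(157, 0), (162, 0), (181, 0), (192, 0)]), (158,
      [(157, 0), (158, 0), (161, 0), (172, 0), (192, 0)]), (163, [(192, 0)]), (179, [(192,
      0)]), (181, [(192, 700)]), (182, [(192, 1200)]), (183, [(192, 1750)]), (184, [(192,
      2420)]), (186, [(192, 4285)]), (192, [(189, 9000), (192, 16384)])])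
    (by decide +kernel)

theorem nonnegOnSlab_57_61 :
    NonnegOnSlab 128 192 certificateExpansion (multiplierPoly (2 ^ 120)) 57 61 :=
  isPackable_certificate.nonnegOnSlab (by decide) (by decide) (cells :=
      [(65, [(123, 0), (157, 0), (159, 0), (166, 0), (192, 0)]), (81, [(107, 0), (130, 0),
      (156, 0), (160, 0), (175, 0), (192, 0)]), (91, [(93, 0), (125, 0), (158, 0), (169, 0),
      (192, 0)]), (97, [(98, 0), (124, 0), (151, 0), (157, 0), (161, 0), (176, 0), (192,
      0)]), (113, [(127, 0), (156, 0), (164, 0), (192, 0)]), (123, [(129, 0), (158, 0), (164,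
      0), (182, 0), (192, 0)]), (125, [(135, 0), (158, 0), (165, 0), (192, 0)]), (157, [(157,
      0), (161, 0), (176, 0), (192, 0)]), (158, [(159, 0), (166, 0), (192, 0)]), (163, [(192,
      0)]), (167, [(192, 0)]), (183, [(192, 0)]), (186, [(192, 1400)]), (187, [(192, 2700)]),
      (188, [(192, 3750)]), (189, [(192, 5000)]), (192, [(192, 8900)])])
    (by decide +kernel)

theorem nonnegOnSlab_61_64 :
    NonnegOnSlab 128 192 certificateExpansion (multiplierPoly (2 ^ 120)) 61 64 :=
  isPackable_certificate.nonnegOnSlab (by decide) (by decide) (cells :=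
      [(81, [(93, 0), (128, 0), (156, 0), (160, 0), (175, 0), (192, 0)]), (97, [(90, 0),
      (101, 0), (126, 0), (157, 0), (158, 0), (161, 0), (172, 0), (192, 0)]), (113, [(127,
      0), (156, 0), (158, 0), (165, 0), (192, 0)]), (123, [(129, 0), (158, 0), (169, 0),
      (192, 0)]), (126, [(134, 0), (158, 0), (168, 0), (192, 0)]), (150, [(156, 0), (161, 0),
      (180, 0), (192, 0)]), (158, [(158, 0), (160, 0), (167, 0), (192, 0)]), (160, [(165, 0),
      (192, 0)]), (163, [(192, 0)]), (187, [(192, 0)]), (190, [(192, 2048)]), (191, [(192,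
      4096)]), (192, [(192, 6000)])])
    (by decide +kernel)

theorem nonnegOnSlab_64_76 :
    NonnegOnSlab 128 192 certificateExpansion (multiplierPoly (2 ^ 120)) 64 76 :=
  isPackable_certificate.nonnegOnSlab (by decide) (by decide) (cells :=
      [(80, [(92, 0), (119, 0), (130, 0), (156, 0), (160, 0), (175, 0), (192, 0)]), (96,
      [(98, 0), (121, 0), (137, 0), (157, 0), (159, 0), (161, 0), (168, 0), (192, 0)]), (100,
      [(130, 0), (156, 0), (157, 0), (158, 0), (161, 0), (172, 0), (192, 0)]), (120, [(127,
      0), (154, 0), (157, 0), (168, 0), (192, 0)]), (126, [(128, 0), (158, 0), (167, 0),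
      (192, 0)]), (138, [(157, 0), (169, 0), (192, 0)]), (154, [(159, 0), (192, 0)]), (158,
      [(159, 0), (168, 0), (192, 0)]), (161, [(161, 0), (172, 0), (192, 0)]), (192, [(192,
      0)])])
    (by decide +kernel)

theorem nonnegOnSlab_76_84 :
    NonnegOnSlab 128 192 certificateExpansion (multiplierPoly (2 ^ 120)) 76 84 :=
  isPackable_certificate.nonnegOnSlab (by decide) (by decide) (cells :=
      [(84, [(114, 0), (140, 0), (157, 0), (192, 0)]), (96, [(110, 0), (126, 0), (149, 0),
      (159, 0), (192, 0)]), (116, [(126, 0), (158, 0), (160, 0), (167, 0), (192, 0)]), (124,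
      [(152, 0), (158, 0), (160, 0), (167, 0), (192, 0)]), (144, [(158, 0), (161, 0), (172,
      0), (192, 0)]), (152, [(161, 0), (192, 0)]), (155, [(170, 0), (192, 0)]), (158, [(170,
      0), (192, 0)]), (192, [(192, 0)])])
    (by decide +kernel)

theorem nonnegOnSlab_84_92 :
    NonnegOnSlab 128 192 certificateExpansion (multiplierPoly (2 ^ 120)) 84 92 :=
  isPackable_certificate.nonnegOnSlab (by decide) (by decide) (cells :=
      [(94, [(118, 0), (128, 0), (157, 0), (163, 0), (186, 0), (192, 0)]), (114, [(124, 0),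
      (157, 0), (165, 0), (192, 0)]), (124, [(126, 0), (157, 0), (163, 0), (183, 0), (192,
      0)]), (136, [(139, 0), (157, 0), (161, 0), (176, 0), (192, 0)]), (156, [(158, 0), (160,
      0), (161, 0), (164, 0), (175, 0), (192, 0)]), (158, [(158, 0), (163, 0), (182, 0),
      (192, 0)]), (159, [(164, 0), (187, 0), (192, 0)]), (192, [(192, 0)])])
    (by decide +kernel)

theorem nonnegOnSlab_92_100 :
    NonnegOnSlab 128 192 certificateExpansion (multiplierPoly (2 ^ 120)) 92 100 :=
  isPackable_certificate.nonnegOnSlab (by decide) (by decide) (cells :=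
      [(100, [(125, 0), (157, 0), (167, 0), (192, 0)]), (124, [(126, 0), (157, 0), (159, 0),
      (166, 0), (192, 0)]), (126, [(141, 0), (157, 0), (158, 0), (161, 0), (172, 0), (192,
      0)]), (146, [(157, 0), (158, 0), (161, 0), (172, 0), (192, 0)]), (158, [(158, 0), (165,
      0), (192, 0)]), (160, [(164, 0), (187, 0), (192, 0)]), (192, [(192, 0)])])
    (by decide +kernel)

theorem nonnegOnSlab_100_116 :
    NonnegOnSlab 128 192 certificateExpansion (multiplierPoly (2 ^ 120)) 100 116 :=
  isPackable_certificate.nonnegOnSlab (by decide) (by decide) (cells :=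
      [(116, [(131, 0), (158, 0), (192, 0)]), (128, [(138, 0), (158, 0), (173, 0), (192,
      0)]), (152, [(157, 0), (166, 0), (192, 0)]), (160, [(161, 0), (191, 0), (192, 0)]),
      (192, [(192, 0)])])
    (by decide +kernel)

theorem nonnegOnSlab_116_122 :
    NonnegOnSlab 128 192 certificateExpansion (multiplierPoly (2 ^ 120)) 116 122 :=
  isPackable_certificate.nonnegOnSlab (by decide) (by decide) (cells :=
      [(126, [(134, 0), (157, 0), (186, 0), (192, 0)]), (146, [(158, 0), (192, 0)]), (158,
      [(161, 0), (192, 0)]), (192, [(192, 0)])])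
    (by decide +kernel)

theorem nonnegOnSlab_122_130 :
    NonnegOnSlab 128 192 certificateExpansion (multiplierPoly (2 ^ 120)) 122 130 :=
  isPackable_certificate.nonnegOnSlab (by decide) (by decide) (cells :=
      [(128, [(149, 0), (158, 0), (160, 0), (167, 0), (192, 0)]), (148, [(159, 0), (192,
      0)]), (158, [(159, 0), (192, 0)]), (160, [(192, 0)]), (192, [(192, 0)])])
    (by decide +kernel)

theorem nonnegOnSlab_130_154 :
    NonnegOnSlab 128 192 certificateExpansion (multiplierPoly (2 ^ 120)) 130 154 :=
  isPackable_certificate.nonnegOnSlab (by decide) (by decide) (cells :=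
      [(154, [(159, 0), (190, 0), (192, 0)]), (160, [(166, 0), (192, 0)]), (168, [(180, 0),
      (192, 0)]), (192, [(192, 0)])])
    (by decide +kernel)

theorem nonnegOnSlab_154_157 :
    NonnegOnSlab 128 192 certificateExpansion (multiplierPoly (2 ^ 120)) 154 157 :=
  isPackable_certificate.nonnegOnSlab (by decide) (by decide) (cells :=
      [(157, [(167, 0), (192, 0)]), (167, [(167, 0), (192, 0)]), (192, [(192, 0)])])
    (by decide +kernel)

theorem nonnegOnSlab_157_160 :
    NonnegOnSlab 128 192 certificateExpansion (multiplierPoly (2 ^ 120)) 157 160 :=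
  isPackable_certificate.nonnegOnSlab (by decide) (by decide) (cells :=
      [(160, [(169, 0), (192, 0)]), (192, [(192, 0)])])
    (by decide +kernel)

theorem nonnegOnSlab_160_192 :
    NonnegOnSlab 128 192 certificateExpansion (multiplierPoly (2 ^ 120)) 160 192 :=
  isPackable_certificate.nonnegOnSlab (by decide) (by decide) (cells :=
      [(192, [(192, 0)])])
    (by decide +kernel)

theorem nonnegOnSlab_certificate :
    NonnegOnSlab 128 192 certificateExpansion (multiplierPoly (2 ^ 120)) 0 192 :=
  nonnegOnSlab_0_1 |>.trans nonnegOnSlab_1_17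
    |>.trans nonnegOnSlab_17_33 |>.trans nonnegOnSlab_33_41 |>.trans nonnegOnSlab_41_49
    |>.trans nonnegOnSlab_49_57 |>.trans nonnegOnSlab_57_61 |>.trans nonnegOnSlab_61_64
    |>.trans nonnegOnSlab_64_76 |>.trans nonnegOnSlab_76_84 |>.trans nonnegOnSlab_84_92
    |>.trans nonnegOnSlab_92_100 |>.trans nonnegOnSlab_100_116 |>.trans nonnegOnSlab_116_122
    |>.trans nonnegOnSlab_122_130 |>.trans nonnegOnSlab_130_154 |>.trans nonnegOnSlab_154_157
    |>.trans nonnegOnSlab_157_160 |>.trans nonnegOnSlab_160_192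

end Certificate

end KissingNumber

open KissingNumber

theorem kissing_number_dim21_le_54584
    (S : Finset (EuclideanSpace ℝ (Fin 21)))
    (hnorm : ∀ x ∈ S, ‖x‖ = 1)
    (hdist : ∀ x ∈ S, ∀ y ∈ S, x ≠ y → 1 ≤ dist x y) :
    S.card ≤ 54584 := by
  have hinner : ∀ x ∈ S, ∀ y ∈ S, x ≠ y → inner ℝ x y ≤ 1 / 2 := fun x hx y hy hxy =>
    inner_le_half_of_one_le_dist (hnorm x hx) (hnorm y hy) (hdist x hx y hy hxy)
  have hpairs : ∀ u ∈ Set.Icc (-1 : ℝ) (1 / 2), 0 ≤ horner Int.cast (1 + u)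
      (pairPoly 18 (2 ^ 128) certificateBase certificateBlocks) := fun u hu =>
    horner_pairPoly_certificate_nonneg (by linarith [hu.1]) (by linarith [hu.2])
  exact card_le_of_polynomial_certificate (by simp) (by simp) hnorm hinner (by positivity)
    certificateBase certificateBlocks sum_sq_certificateBase_lt hpairs
    isZero_symmetricSum_add_certificateExpansion (by norm_num) nonnegOnSlab_certificate
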